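/- Let 𝕋² be the torus with periods L₁, L₂ > 0, let a₁, a₂ : ℝ → ℝ be continuous with a_j being L_j-periodic, with fluxes α_j = (1/(2π))∫₀^{L_j} a_j(x)dx ∉ ℤ, and let A(x) = (a₁(x₁), a₂(x₂)). Let K(α) = min(K₁(α), K₂(α)), where K₁(α) = k(α)² with k(α) = 1/|sin(2πα)| for α mod 1 ∈ (0,1/4)∪(3/4,1) and k(α) = 1 for α mod 1 ∈ [1/4,3/4], and K₂(α) = (5/(3√3π))·[sup_{b≥0} b^{5/3} Σ_{k∈ℤ}(|k+α|³+b)^{−2}]². Then for every family ψ₁,…,ψ_N ∈ H¹(𝕋²) orthonormal in L²(𝕋²), with ρ(x) = Σ_{n=1}^N |ψ_n(x)|², one has ∫_{𝕋²} ρ(x)² dx ≤ (π/6) √(K(α₁)K(α₂)) · Σ_{n=1}^N ∫_{𝕋²} |i∇ψ_n(x) − A(x)ψ_n(x)|²_{ℂ²} dx. -/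

import Mathlib

open MeasureTheory Real Filter

/-- The constant `k(α)` from (K1): `1/|sin(2πα)|` when `α mod 1 ∈ (0,1/4)∪(3/4,1)`,
and `1` when `α mod 1 ∈ [1/4,3/4]`. -/
noncomputable def kConst (α : ℝ) : ℝ :=
  if 1/4 ≤ Int.fract α ∧ Int.fract α ≤ 3/4 then 1
  else 1 / |Real.sin (2 * Real.pi * α)|

/-- `F(b,α) = b^{5/3} Σ_{k∈ℤ} (|k+α|³+b)^{-2}`. -/
noncomputable def Fsum (α b : ℝ) : ℝ :=
  b ^ ((5:ℝ)/3) * ∑' k : ℤ, ((|(k : ℝ) + α| ^ 3 + b) ^ 2)⁻¹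

/-- `sup_{b ≥ 0} F(b,α)`. -/
noncomputable def supF (α : ℝ) : ℝ := ⨆ b : {x : ℝ // 0 ≤ x}, Fsum α b.1

/-- The constant `K₂(α)`. -/
noncomputable def K2 (α : ℝ) : ℝ :=
  5 / (3 * Real.sqrt 3 * Real.pi) * (supF α) ^ 2

/-- `K(α) = min(K₁(α), K₂(α))` with `K₁(α) = k(α)²`. -/
noncomputable def Kmin (α : ℝ) : ℝ := min ((kConst α) ^ 2) (K2 α)

/-- The magnetic momentum operator `(i ∂_{x_j} - a_j(x_j))` acting on functions on `ℝ^d`. -/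
noncomputable def magOp {d : ℕ} (a : Fin d → ℝ → ℝ) (j : Fin d)
    (f : (Fin d → ℝ) → ℂ) (x : Fin d → ℝ) : ℂ :=
  Complex.I * fderiv ℝ f x (Pi.single j 1) - (a j (x j) : ℂ) * f x

/-! The gauge phase `exp (i ∑ⱼ ∫ aⱼ)` turns the periodic `ψ n` into functions that are Bloch in
each variable, and the magnetic gradient into the ordinary one. In one dimension, orthonormal Bloch
functions `u n` with values in a Hilbert space satisfy
`∫ tr (G x ^ 3) ≤ Kmin α * ∑ n, ∫ ‖u' n‖ ^ 2`, where `G x` is the Gram matrix of the values at `x`.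
A unitary rotation of the family makes `G x` diagonal at any given point, so that only single
members `φ` of the rotated family matter: the constant `kConst α ^ 2` comes from the inequality
`‖φ x‖ ^ 4 ≤ kConst α ^ 2 * (∫ ‖φ‖ ^ 2) * ∫ ‖φ'‖ ^ 2`, and `K2 α` from splitting `φ` into low and
high frequencies and integrating over the splitting parameter.

The two-dimensional bound comes from lifting in dimension. In the first variable the inequality is
applied to `L²`-valued functions, whose Gram matrix at `x` is that of the slices `y ↦ ψ n (x, y)`.
On each slice the scalar inequality, applied to the spectral projections of the corresponding
density matrix and integrated over the spectral level, bounds `∫ ρ ^ 2` by the energy in `y` plus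
the trace of the cubed Gram matrix, which the first variable controls. -/

open scoped InnerProductSpace ComplexConjugate

section Sobolev

variable {H : Type*} [NormedAddCommGroup H] [InnerProductSpace ℂ H]

/-- `φ` is a continuously differentiable `H`-valued function on the line, with derivative `φ'`, and
satisfies the Bloch condition `φ (x + L) = e^{2πiα} φ x`. After a gauge transformation these are the
functions on a circle of length `L` threaded by a magnetic flux `α`. -/
structure IsBloch (α L : ℝ) (φ φ' : ℝ → H) : Prop where
  hasDerivAt : ∀ x, HasDerivAt φ (φ' x) x
  continuous_deriv : Continuous φ'
  map_add_period : ∀ x, φ (x + L) = Complex.exp ((2 * π * α : ℝ) * Complex.I) • φ x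

namespace IsBloch

variable {α L : ℝ} {φ φ' : ℝ → H}

lemma continuous (h : IsBloch α L φ φ') : Continuous φ :=
  continuous_iff_continuousAt.2 fun x => (h.hasDerivAt x).continuousAt

lemma deriv_map_add_period (h : IsBloch α L φ φ') (x : ℝ) :
    φ' (x + L) = Complex.exp ((2 * π * α : ℝ) * Complex.I) • φ' x := by
  have hshift : HasDerivAt (fun x => φ (x + L)) (φ' (x + L)) x :=
    (h.hasDerivAt (x + L)).comp_add_const x L
  exact hshift.unique (((h.hasDerivAt x).const_smul _).congr_of_eventuallyEq
    (Eventually.of_forall h.map_add_period))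

lemma comp_add_const (h : IsBloch α L φ φ') (x : ℝ) :
    IsBloch α L (fun t => φ (t + x)) (fun t => φ' (t + x)) where
  hasDerivAt t := (h.hasDerivAt (t + x)).comp_add_const t x
  continuous_deriv := h.continuous_deriv.comp (continuous_add_const x)
  map_add_period t := by rw [add_right_comm, h.map_add_period]

lemma periodic_norm_sq (h : IsBloch α L φ φ') (μ : ℝ) :
    Function.Periodic (fun x => ‖φ' x‖ ^ 2 + μ ^ 2 * ‖φ x‖ ^ 2) L := fun x => by
  simp only [h.map_add_period, h.deriv_map_add_period, norm_smul, Complex.norm_exp_ofReal_mul_I,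
    one_mul]

lemma const_smul (h : IsBloch α L φ φ') (c : ℂ) :
    IsBloch α L (fun x => c • φ x) (fun x => c • φ' x) where
  hasDerivAt x := (h.hasDerivAt x).const_smul c
  continuous_deriv := h.continuous_deriv.const_smul c
  map_add_period x := by rw [h.map_add_period, smul_comm]

lemma sum {ι : Type*} [Fintype ι] {u u' : ι → ℝ → H} (h : ∀ n, IsBloch α L (u n) (u' n)) :
    IsBloch α L (fun x => ∑ n, u n x) (fun x => ∑ n, u' n x) where
  hasDerivAt x := HasDerivAt.fun_sum fun n _ => (h n).hasDerivAt x
  continuous_deriv := continuous_finsetSum _ fun n _ => (h n).continuous_deriv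
  map_add_period x := by simp only [(h _).map_add_period, Finset.smul_sum]

end IsBloch

/- Writing `φ = w + χ`, the cross terms integrate to zero because `w'' = μ² w` and `χ` vanishes at
both end points. -/
lemma re_inner_sub_le_integral_of_hasDerivAt {w w' φ φ' : ℝ → H} {L μ : ℝ} (hL : 0 ≤ L)
    (hw : ∀ x, HasDerivAt w (w' x) x) (hw' : ∀ x, HasDerivAt w' (((μ ^ 2 : ℝ) : ℂ) • w x) x)
    (hφ : ∀ x, HasDerivAt φ (φ' x) x) (hφ' : Continuous φ') (h0 : φ 0 = w 0) (h1 : φ L = w L) :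
    (⟪w' L, w L⟫_ℂ).re - (⟪w' 0, w 0⟫_ℂ).re ≤
      ∫ x in (0 : ℝ)..L, (‖φ' x‖ ^ 2 + μ ^ 2 * ‖φ x‖ ^ 2) := by
  have cw : Continuous w := continuous_iff_continuousAt.2 fun x => (hw x).continuousAt
  have cw' : Continuous w' := continuous_iff_continuousAt.2 fun x => (hw' x).continuousAt
  have cφ : Continuous φ := continuous_iff_continuousAt.2 fun x => (hφ x).continuousAt
  set G' : ℝ → ℝ := fun x => 2 * ((⟪w' x, φ' x⟫_ℂ).re + μ ^ 2 * (⟪w x, φ x⟫_ℂ).re)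
    - (‖w' x‖ ^ 2 + μ ^ 2 * ‖w x‖ ^ 2) with hG'
  have hderiv : ∀ x, HasDerivAt (fun x => (2 * ⟪w' x, φ x⟫_ℂ - ⟪w' x, w x⟫_ℂ).re) (G' x) x := by
    intro x
    refine (Complex.reCLM.hasFDerivAt.comp_hasDerivAt x
      ((((hw' x).inner ℂ (hφ x)).const_mul 2).sub ((hw' x).inner ℂ (hw x)))).congr_deriv ?_
    simp only [hG', inner_smul_left, inner_self_eq_norm_sq_to_K, Complex.conj_ofReal,
      Complex.reCLM_apply, Complex.coe_algebraMap, ← Complex.ofReal_pow, Complex.sub_re,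
      Complex.add_re, ← Complex.ofReal_ofNat, Complex.re_ofReal_mul, Complex.ofReal_re]
  have hcont : Continuous G' := by fun_prop
  have hFTC := intervalIntegral.integral_eq_sub_of_hasDerivAt (fun x _ => hderiv x)
    (hcont.intervalIntegrable 0 L)
  calc _ = ∫ x in (0 : ℝ)..L, G' x := by
        rw [hFTC, h0, h1, two_mul, two_mul, add_sub_cancel_right, add_sub_cancel_right]
    _ ≤ _ := by
        refine intervalIntegral.integral_mono_on hL (hcont.intervalIntegrable 0 L)
          (Continuous.intervalIntegrable (by fun_prop) 0 L) fun x _ => ?_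
        have hd := norm_sub_sq (𝕜 := ℂ) (w' x) (φ' x)
        have hv := norm_sub_sq (𝕜 := ℂ) (w x) (φ x)
        simp only [hG', RCLike.re_to_complex] at hd hv ⊢
        nlinarith [sq_nonneg ‖w' x - φ' x‖, mul_nonneg (sq_nonneg μ) (sq_nonneg ‖w x - φ x‖)]

lemma hasDerivAt_sinh_add (L μ : ℝ) (e : ℂ) (x : ℝ) :
    HasDerivAt (fun x : ℝ => ((sinh (μ * (L - x)) : ℝ) : ℂ) + e * (sinh (μ * x) : ℝ))
      (μ * (-((cosh (μ * (L - x)) : ℝ) : ℂ) + e * (cosh (μ * x) : ℝ))) x := by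
  have h1 := ((((hasDerivAt_id x).const_sub L).const_mul μ).sinh).ofReal_comp
  have h2 := ((((hasDerivAt_id x).const_mul μ).sinh).ofReal_comp).const_mul e
  refine (h1.add h2).congr_deriv ?_
  simp only [id]; push_cast; ring

lemma hasDerivAt_cosh_add (L μ : ℝ) (e : ℂ) (x : ℝ) :
    HasDerivAt (fun x : ℝ => μ * (-((cosh (μ * (L - x)) : ℝ) : ℂ) + e * (cosh (μ * x) : ℝ)))
      ((μ ^ 2 : ℝ) * (((sinh (μ * (L - x)) : ℝ) : ℂ) + e * (sinh (μ * x) : ℝ))) x := by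
  have h1 := ((((hasDerivAt_id x).const_sub L).const_mul μ).cosh).ofReal_comp
  have h2 := ((((hasDerivAt_id x).const_mul μ).cosh).ofReal_comp).const_mul e
  refine ((h1.neg.add h2).const_mul (μ : ℂ)).congr_deriv ?_
  simp only [id]; push_cast; ring

/- The minimiser of the right-hand side with prescribed value `φ 0` is
`x ↦ (sinh (μ (L - x)) + e^{2πiα} sinh (μ x)) / sinh (μ L) • φ 0`. -/
lemma IsBloch.norm_sq_zero_le {α L : ℝ} {φ φ' : ℝ → H} (h : IsBloch α L φ φ') (hL : 0 < L) {μ : ℝ}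
    (hμ : 0 < μ) :
    2 * μ * (cosh (μ * L) - cos (2 * π * α)) * ‖φ 0‖ ^ 2 ≤
      sinh (μ * L) * ∫ x in (0 : ℝ)..L, (‖φ' x‖ ^ 2 + μ ^ 2 * ‖φ x‖ ^ 2) := by
  have hS : 0 < sinh (μ * L) := sinh_pos_iff.2 (by positivity)
  set e := Complex.exp ((2 * π * α : ℝ) * Complex.I) with he
  set S : ℂ := ((sinh (μ * L) : ℝ) : ℂ) with hS'
  have hSC : S ≠ 0 := Complex.ofReal_ne_zero.2 hS.ne'
  set v := S⁻¹ • φ 0 with hv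
  have hφ0 : φ 0 = S • v := by rw [hv, smul_inv_smul₀ hSC]
  have hφL : φ L = (e * S) • v := by rw [← zero_add L, h.map_add_period, hφ0, mul_smul]
  have key := re_inner_sub_le_integral_of_hasDerivAt (μ := μ) hL.le
    (fun x => (hasDerivAt_sinh_add L μ e x).smul_const v)
    (fun x => ((hasDerivAt_cosh_add L μ e x).smul_const v).congr_deriv (mul_smul _ _ v))
    h.hasDerivAt h.continuous_deriv (by simp [hφ0, hS']) (by simp [hφL, hS'])
  have hre : e.re = cos (2 * π * α) := Complex.exp_ofReal_mul_I_re _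
  have hsq : e.re * e.re + e.im * e.im = 1 := by
    rw [← Complex.normSq_apply, Complex.normSq_eq_norm_sq, he, Complex.norm_exp_ofReal_mul_I,
      one_pow]
  have hnorm : ‖φ 0‖ ^ 2 = sinh (μ * L) ^ 2 * ‖v‖ ^ 2 := by
    rw [hφ0, norm_smul, hS', Complex.norm_real, norm_of_nonneg hS.le, mul_pow]
  refine le_of_eq_of_le ?_ (mul_le_mul_of_nonneg_left key hS.le)
  simp only [inner_smul_left, inner_smul_right, inner_self_eq_norm_sq_to_K, Complex.coe_algebraMap,
    ← Complex.ofReal_pow, hnorm, ← hre, sub_self, sub_zero, mul_zero, sinh_zero, cosh_zero,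
    map_mul, map_add, map_neg, Complex.conj_ofReal]
  simp only [Complex.mul_re, Complex.mul_im, Complex.add_re, Complex.add_im, Complex.neg_re,
    Complex.neg_im, Complex.conj_re, Complex.conj_im, Complex.ofReal_re, Complex.ofReal_im]
  linear_combination (-sinh (μ * L) ^ 2 * ‖v‖ ^ 2 * μ * cosh (μ * L)) * hsq

lemma kConst_nonneg (α : ℝ) : 0 ≤ kConst α := by
  unfold kConst
  split_ifs <;> positivity

lemma sin_two_pi_mul_ne_zero {α : ℝ} (hα : ∀ m : ℤ, α ≠ m) (h2 : Int.fract α ≠ 1 / 2) :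
    sin (2 * π * α) ≠ 0 := by
  intro h0
  obtain ⟨n, hn⟩ := sin_eq_zero_iff.1 h0
  have hn2 : (n : ℝ) = 2 * α := mul_right_cancel₀ pi_ne_zero (by linarith)
  obtain ⟨m, rfl | rfl⟩ := Int.even_or_odd' n <;> push_cast at hn2
  · exact hα m (by linarith)
  · refine h2 ?_
    rw [show α = 1 / 2 + (m : ℝ) by linarith, Int.fract_add_intCast, Int.fract_eq_self]
    norm_num

lemma sinh_le_kConst_mul {α : ℝ} (hα : ∀ m : ℤ, α ≠ m) (t : ℝ) :
    sinh t ≤ kConst α * (cosh t - cos (2 * π * α)) := by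
  unfold kConst
  split_ifs with h
  · have hper : cos (2 * π * α) = cos (2 * π * Int.fract α) := by
      rw [← cos_sub_int_mul_two_pi _ ⌊α⌋, Int.fract]
      ring_nf
    have hcos : cos (2 * π * α) ≤ 0 := by
      rw [hper]
      apply cos_nonpos_of_pi_div_two_le_of_le <;> nlinarith [pi_pos, h.1, h.2]
    linarith [sinh_lt_cosh t]
  · have hsin : 0 < |sin (2 * π * α)| :=
      abs_pos.2 (sin_two_pi_mul_ne_zero hα fun h2 => h (by rw [h2]; norm_num))
    have hcosh : cos (2 * π * α) ≤ cosh t := (cos_le_one _).trans (one_le_cosh t)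
    rw [one_div, inv_mul_eq_div, le_div_iff₀ hsin]
    refine (le_abs_self _).trans (abs_le_of_sq_le_sq ?_ (sub_nonneg.2 hcosh))
    rw [mul_pow, sq_abs, sin_sq, sinh_sq]
    nlinarith [sq_nonneg (cos (2 * π * α) * cosh t - 1)]

lemma kConst_pos {α : ℝ} (hα : ∀ m : ℤ, α ≠ m) : 0 < kConst α := by
  refine (kConst_nonneg α).lt_of_ne' fun h0 => ?_
  have h := sinh_le_kConst_mul hα 1
  rw [h0, zero_mul] at h
  exact h.not_gt (sinh_pos_iff.2 one_pos)

lemma IsBloch.two_mul_norm_sq_le {α L : ℝ} {φ φ' : ℝ → H} (h : IsBloch α L φ φ') (hL : 0 < L)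
    (hα : ∀ m : ℤ, α ≠ m) {μ : ℝ} (hμ : 0 < μ) (x : ℝ) :
    2 * μ * ‖φ x‖ ^ 2 ≤ kConst α * ∫ x in (0 : ℝ)..L, (‖φ' x‖ ^ 2 + μ ^ 2 * ‖φ x‖ ^ 2) := by
  have h0 := (h.comp_add_const x).norm_sq_zero_le hL hμ
  rw [intervalIntegral.integral_comp_add_right (fun x => ‖φ' x‖ ^ 2 + μ ^ 2 * ‖φ x‖ ^ 2), zero_add,
    add_comm L x, (h.periodic_norm_sq μ).intervalIntegral_add_eq x 0, zero_add] at h0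
  set I := ∫ x in (0 : ℝ)..L, (‖φ' x‖ ^ 2 + μ ^ 2 * ‖φ x‖ ^ 2)
  have hI : 0 ≤ I := intervalIntegral.integral_nonneg hL.le fun x _ => by positivity
  have hD : 0 < cosh (μ * L) - cos (2 * π * α) :=
    sub_pos.2 ((cos_le_one _).trans_lt (one_lt_cosh.2 (by positivity)))
  refine le_of_mul_le_mul_right ?_ hD
  calc 2 * μ * ‖φ x‖ ^ 2 * (cosh (μ * L) - cos (2 * π * α))
      = 2 * μ * (cosh (μ * L) - cos (2 * π * α)) * ‖φ x‖ ^ 2 := by ring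
    _ ≤ kConst α * (cosh (μ * L) - cos (2 * π * α)) * I :=
        h0.trans (mul_le_mul_of_nonneg_right (sinh_le_kConst_mul hα _) hI)
    _ = kConst α * I * (cosh (μ * L) - cos (2 * π * α)) := by ring

lemma IsBloch.norm_pow_four_le {α L : ℝ} {φ φ' : ℝ → H} (h : IsBloch α L φ φ') (hL : 0 < L)
    (hα : ∀ m : ℤ, α ≠ m) (x : ℝ) :
    ‖φ x‖ ^ 4 ≤
      kConst α ^ 2 * (∫ t in (0 : ℝ)..L, ‖φ t‖ ^ 2) * ∫ t in (0 : ℝ)..L, ‖φ' t‖ ^ 2 := by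
  have cφ := h.continuous
  have cφ' := h.continuous_deriv
  set P := ∫ t in (0 : ℝ)..L, ‖φ t‖ ^ 2
  set D := ∫ t in (0 : ℝ)..L, ‖φ' t‖ ^ 2
  have hk := kConst_nonneg α
  have hP0 : 0 ≤ P := intervalIntegral.integral_nonneg hL.le fun x _ => by positivity
  have hD0 : 0 ≤ D := intervalIntegral.integral_nonneg hL.le fun x _ => by positivity
  have hquad : ∀ μ : ℝ, 0 ≤ kConst α * P * (μ * μ) + -(2 * ‖φ x‖ ^ 2) * μ + kConst α * D := by
    intro μ
    rcases le_or_gt μ 0 with hμ | hμ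
    · have := mul_nonneg (sq_nonneg ‖φ x‖) (neg_nonneg.2 hμ)
      linarith [mul_nonneg (mul_nonneg hk hP0) (mul_self_nonneg μ), mul_nonneg hk hD0]
    · have hsplit : ∫ t in (0 : ℝ)..L, (‖φ' t‖ ^ 2 + μ ^ 2 * ‖φ t‖ ^ 2) = D + μ ^ 2 * P := by
        rw [intervalIntegral.integral_add, intervalIntegral.integral_const_mul]
        all_goals exact Continuous.intervalIntegrable (by fun_prop) 0 L
      have := h.two_mul_norm_sq_le hL hα hμ x
      rw [hsplit] at this
      linarith
  have := discrim_le_zero hquad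
  rw [discrim] at this
  linarith

end Sobolev

section Gram

open Matrix

variable {ι : Type*} [Fintype ι]

/-- The change of basis `i ↦ ∑ n, U n i • u n`, used with a unitary `U` to make a family
orthogonal. -/
def rotate {E : Type*} [AddCommMonoid E] [Module ℂ E] (U : Matrix ι ι ℂ) (u : ι → E) (i : ι) : E :=
  ∑ n, U n i • u n

lemma rotate_apply {X E : Type*} [AddCommMonoid E] [Module ℂ E] (U : Matrix ι ι ℂ)
    (u : ι → X → E) (i : ι) (x : X) : rotate U u i x = rotate U (fun n => u n x) i := by
  simp only [rotate, Finset.sum_apply, Pi.smul_apply]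

variable {H : Type*} [NormedAddCommGroup H] [InnerProductSpace ℂ H]

lemma IsBloch.rotate {α L : ℝ} {u u' : ι → ℝ → H} (h : ∀ n, IsBloch α L (u n) (u' n))
    (U : Matrix ι ι ℂ) (i : ι) : IsBloch α L (rotate U u i) (rotate U u' i) := by
  convert IsBloch.sum fun n => (h n).const_smul (U n i) using 1 <;> ext x <;>
    exact rotate_apply U _ i x

lemma inner_rotate (U : Matrix ι ι ℂ) (u : ι → H) (i j : ι) :
    ⟪rotate U u i, rotate U u j⟫_ℂ =
      ∑ m, (∑ n, star (U n i) * ⟪u n, u m⟫_ℂ) * U m j := by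
  simp only [rotate, sum_inner, inner_sum, inner_smul_left, inner_smul_right, Finset.sum_mul,
    starRingEnd_apply, mul_comm (U _ j)]

lemma gram_rotate (U : Matrix ι ι ℂ) (u : ι → H) :
    gram ℂ (rotate U u) = Uᴴ * gram ℂ u * U := by
  ext i j
  simp only [gram_apply, inner_rotate, mul_apply, conjTranspose_apply]

lemma trace_gram (u : ι → H) : (gram ℂ u).trace = ((∑ n, ‖u n‖ ^ 2 : ℝ) : ℂ) := by
  simp only [trace, diag_apply, gram_apply, inner_self_eq_norm_sq_to_K, Complex.ofReal_sum,
    Complex.ofReal_pow, Complex.coe_algebraMap]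

/-- The trace of the cube of the Gram matrix of `u`, which is also the trace of the cube of the
operator `∑ n, |u n⟩⟨u n|`. -/
noncomputable def gramCube (u : ι → H) : ℝ := (gram ℂ u * gram ℂ u * gram ℂ u).trace.re

lemma continuous_gramCube {u : ι → ℝ → H} (hu : ∀ n, Continuous (u n)) :
    Continuous fun x => gramCube fun n => u n x := by
  have hgram : Continuous fun x => gram ℂ fun n => u n x :=
    continuous_matrix fun n m => (hu n).inner (hu m)
  exact Complex.continuous_re.comp ((hgram.matrix_mul hgram).matrix_mul hgram).matrix_trace

variable [DecidableEq ι]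

lemma conjTranspose_mul_mul_mul_of_mem_unitaryGroup {U : Matrix ι ι ℂ} (hU : U ∈ unitaryGroup ι ℂ)
    (A B : Matrix ι ι ℂ) : Uᴴ * A * U * (Uᴴ * B * U) = Uᴴ * (A * B) * U := by
  have hUU : U * Uᴴ = 1 := mem_unitaryGroup_iff.1 hU
  calc Uᴴ * A * U * (Uᴴ * B * U) = Uᴴ * A * (U * Uᴴ) * B * U := by simp only [Matrix.mul_assoc]
    _ = Uᴴ * (A * B) * U := by rw [hUU, Matrix.mul_one, Matrix.mul_assoc Uᴴ]

lemma trace_conjTranspose_mul_mul_of_mem_unitaryGroup {U : Matrix ι ι ℂ}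
    (hU : U ∈ unitaryGroup ι ℂ) (A : Matrix ι ι ℂ) : (Uᴴ * A * U).trace = A.trace := by
  rw [trace_mul_comm, ← Matrix.mul_assoc, ← star_eq_conjTranspose, mem_unitaryGroup_iff.1 hU,
    Matrix.one_mul]

lemma sum_norm_sq_rotate {U : Matrix ι ι ℂ} (hU : U ∈ unitaryGroup ι ℂ) (u : ι → H) :
    ∑ i, ‖rotate U u i‖ ^ 2 = ∑ n, ‖u n‖ ^ 2 := by
  rw [← Complex.ofReal_inj, ← trace_gram, ← trace_gram, gram_rotate,
    trace_conjTranspose_mul_mul_of_mem_unitaryGroup hU]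

lemma exists_unitary_rotate_orthogonal (u : ι → H) :
    ∃ U ∈ unitaryGroup ι ℂ, Pairwise fun i j => ⟪rotate U u i, rotate U u j⟫_ℂ = 0 := by
  have hherm := isHermitian_gram ℂ u
  refine ⟨hherm.eigenvectorUnitary, hherm.eigenvectorUnitary.2, fun i j hij => ?_⟩
  have hdiag := hherm.conjStarAlgAut_star_eigenvectorUnitary
  rw [Unitary.conjStarAlgAut_star_apply, star_eq_conjTranspose, ← gram_rotate] at hdiag
  exact (congrFun₂ hdiag i j).trans (diagonal_apply_ne _ hij)

omit [Fintype ι] in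
lemma gram_eq_diagonal_of_orthogonal {u : ι → H} (hu : Pairwise fun i j => ⟪u i, u j⟫_ℂ = 0) :
    gram ℂ u = diagonal fun i => ((‖u i‖ ^ 2 : ℝ) : ℂ) := by
  ext i j
  rcases eq_or_ne i j with rfl | hij
  · rw [gram_apply, inner_self_eq_norm_sq_to_K, diagonal_apply_eq, Complex.ofReal_pow]
    rfl
  · rw [gram_apply, hu hij, diagonal_apply_ne _ hij]

omit [DecidableEq ι] in
lemma gramCube_of_orthogonal {u : ι → H} (hu : Pairwise fun i j => ⟪u i, u j⟫_ℂ = 0) :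
    gramCube u = ∑ i, ‖u i‖ ^ 6 := by
  classical
  rw [gramCube, gram_eq_diagonal_of_orthogonal hu, diagonal_mul_diagonal, diagonal_mul_diagonal,
    trace_diagonal, Complex.re_sum]
  refine Finset.sum_congr rfl fun i _ => ?_
  rw [← Complex.ofReal_mul, ← Complex.ofReal_mul, Complex.ofReal_re]
  ring

lemma gramCube_rotate {U : Matrix ι ι ℂ} (hU : U ∈ unitaryGroup ι ℂ) (u : ι → H) :
    gramCube (rotate U u) = gramCube u := by
  rw [gramCube, gram_rotate, conjTranspose_mul_mul_mul_of_mem_unitaryGroup hU,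
    conjTranspose_mul_mul_mul_of_mem_unitaryGroup hU,
    trace_conjTranspose_mul_mul_of_mem_unitaryGroup hU, gramCube]

end Gram

section L2Gram

open Matrix

variable {ι : Type*} [Fintype ι] {H : Type*} [NormedAddCommGroup H] [InnerProductSpace ℂ H]
  {L : ℝ} {u : ι → ℝ → H}

/-- The Gram matrix of the functions `u n` in `L²([0, L]; H)`. -/
noncomputable def l2Gram {ι : Type*} (L : ℝ) (u : ι → ℝ → H) : Matrix ι ι ℂ :=
  of fun n m => ∫ x in (0 : ℝ)..L, ⟪u n x, u m x⟫_ℂ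

lemma l2Gram_apply_self {ι : Type*} (L : ℝ) (u : ι → ℝ → H) (n : ι) :
    l2Gram L u n n = ((∫ x in (0 : ℝ)..L, ‖u n x‖ ^ 2 : ℝ) : ℂ) := by
  simp only [l2Gram, of_apply, inner_self_eq_norm_sq_to_K, Complex.coe_algebraMap,
    ← Complex.ofReal_pow, intervalIntegral.integral_ofReal]

lemma integral_inner_sum_sum (hu : ∀ n, Continuous (u n)) (c : ι → ι → ℂ) :
    ∫ x in (0 : ℝ)..L, ∑ m, ∑ n, c n m * ⟪u n x, u m x⟫_ℂ = ∑ m, ∑ n, c n m * l2Gram L u n m := by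
  have hint : ∀ n m, IntervalIntegrable (fun x => c n m * ⟪u n x, u m x⟫_ℂ) volume 0 L :=
    fun n m => (continuous_const.mul ((hu n).inner (hu m))).intervalIntegrable 0 L
  have hsum : ∀ m, IntervalIntegrable (fun x => ∑ n, c n m * ⟪u n x, u m x⟫_ℂ) volume 0 L :=
    fun m => by simpa only [Finset.sum_fn] using IntervalIntegrable.sum _ fun n _ => hint n m
  rw [intervalIntegral.integral_finsetSum fun m _ => hsum m]
  refine Finset.sum_congr rfl fun m _ => ?_
  rw [intervalIntegral.integral_finsetSum fun n _ => hint n m]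
  exact Finset.sum_congr rfl fun n _ => intervalIntegral.integral_const_mul _ _

lemma l2Gram_rotate (hu : ∀ n, Continuous (u n)) (U : Matrix ι ι ℂ) :
    l2Gram L (rotate U u) = Uᴴ * l2Gram L u * U := by
  ext i j
  have := integral_inner_sum_sum (L := L) hu fun n m => star (U n i) * U m j
  simp only [l2Gram, of_apply, rotate_apply, inner_rotate, mul_apply, conjTranspose_apply,
    Finset.sum_mul, mul_right_comm _ _ (U _ j)] at this ⊢
  exact this

lemma sum_integral_norm_sq_rotate [DecidableEq ι] (hu : ∀ n, Continuous (u n)) {U : Matrix ι ι ℂ}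
    (hU : U ∈ unitaryGroup ι ℂ) :
    ∑ i, ∫ x in (0 : ℝ)..L, ‖rotate U u i x‖ ^ 2 = ∑ n, ∫ x in (0 : ℝ)..L, ‖u n x‖ ^ 2 := by
  have htrace := trace_conjTranspose_mul_mul_of_mem_unitaryGroup hU (l2Gram L u)
  simp only [← l2Gram_rotate hu, trace, diag_apply, l2Gram_apply_self] at htrace
  exact_mod_cast htrace

lemma l2Gram_rotate_eq_one [DecidableEq ι] (hu : ∀ n, Continuous (u n)) (h1 : l2Gram L u = 1)
    {U : Matrix ι ι ℂ} (hU : U ∈ unitaryGroup ι ℂ) : l2Gram L (rotate U u) = 1 := by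
  rw [l2Gram_rotate hu, h1, Matrix.mul_one]
  exact mem_unitaryGroup_iff'.1 hU

omit [Fintype ι] in
lemma integral_norm_sq_eq_one [DecidableEq ι] (h1 : l2Gram L u = 1) (n : ι) :
    ∫ x in (0 : ℝ)..L, ‖u n x‖ ^ 2 = 1 := by
  have := l2Gram_apply_self L u n
  rw [h1, one_apply_eq] at this
  exact_mod_cast this.symm

lemma integral_trace_gram_mul (hu : ∀ n, Continuous (u n)) (D : Matrix ι ι ℂ) :
    ∫ x in (0 : ℝ)..L, (gram ℂ (fun n => u n x) * D).trace = (l2Gram L u * D).trace := by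
  have := integral_inner_sum_sum (L := L) hu fun n m => D m n
  simp only [trace, diag_apply, mul_apply, gram_apply, mul_comm _ (D _ _)]
  rw [Finset.sum_comm, ← this]
  exact intervalIntegral.integral_congr fun x _ => Finset.sum_comm

end L2Gram

section LiebThirring

open Matrix

variable {H : Type*} [NormedAddCommGroup H] [InnerProductSpace ℂ H] {α L : ℝ}

/-- The one-dimensional Lieb–Thirring inequality with constant `K` for `H`-valued Bloch functions
`u n` orthonormal in `L²([0, L]; H)`. The density of the scalar inequality is replaced by the
Gram matrix of the values `u n x`, and its cube by the trace of the cube. -/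
def LiebThirringIneq (H : Type*) [NormedAddCommGroup H] [InnerProductSpace ℂ H]
    (K α L : ℝ) : Prop :=
  ∀ {ι : Type} [Fintype ι] [DecidableEq ι] (u u' : ι → ℝ → H),
    (∀ n, IsBloch α L (u n) (u' n)) → l2Gram L u = 1 →
      ∫ x in (0 : ℝ)..L, gramCube (fun n => u n x) ≤ K * ∑ n, ∫ x in (0 : ℝ)..L, ‖u' n x‖ ^ 2

lemma gramCube_le_kConst_mul_trace {ι : Type*} [Fintype ι] [DecidableEq ι] {u u' : ι → ℝ → H}
    (hL : 0 < L) (hα : ∀ m : ℤ, α ≠ m) (hu : ∀ n, IsBloch α L (u n) (u' n))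
    (h1 : l2Gram L u = 1) (x : ℝ) :
    gramCube (fun n => u n x) ≤
      kConst α ^ 2 * (gram ℂ (fun n => u n x) * l2Gram L u').trace.re := by
  obtain ⟨U, hU, horth⟩ := exists_unitary_rotate_orthogonal fun n => u n x
  have hw := IsBloch.rotate hu U
  have hnorm := integral_norm_sq_eq_one
    (l2Gram_rotate_eq_one (fun n => (hu n).continuous) h1 hU)
  have htrace : (gram ℂ (fun n => u n x) * l2Gram L u').trace =
      (gram ℂ (rotate U fun n => u n x) * l2Gram L (rotate U u')).trace := by
    rw [gram_rotate, l2Gram_rotate fun n => (hu n).continuous_deriv,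
      conjTranspose_mul_mul_mul_of_mem_unitaryGroup hU,
      trace_conjTranspose_mul_mul_of_mem_unitaryGroup hU]
  rw [htrace, gram_eq_diagonal_of_orthogonal horth, ← gramCube_rotate hU,
    gramCube_of_orthogonal horth, trace, Complex.re_sum, Finset.mul_sum]
  refine Finset.sum_le_sum fun i _ => ?_
  rw [diag_apply, diagonal_mul, l2Gram_apply_self, ← Complex.ofReal_mul, Complex.ofReal_re,
    ← rotate_apply]
  have h4 := (hw i).norm_pow_four_le hL hα x
  rw [hnorm i, mul_one] at h4
  calc ‖rotate U u i x‖ ^ 6 = ‖rotate U u i x‖ ^ 2 * ‖rotate U u i x‖ ^ 4 := by ring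
    _ ≤ ‖rotate U u i x‖ ^ 2 * (kConst α ^ 2 * ∫ t in (0 : ℝ)..L, ‖rotate U u' i t‖ ^ 2) :=
        mul_le_mul_of_nonneg_left h4 (sq_nonneg _)
    _ = _ := by ring

theorem liebThirringIneq_kConst_sq (hL : 0 < L) (hα : ∀ m : ℤ, α ≠ m) :
    LiebThirringIneq H (kConst α ^ 2) α L := by
  intro ι _ _ u u' hu h1
  have cu := fun n => (hu n).continuous
  have hcont : Continuous fun x => (gram ℂ (fun n => u n x) * l2Gram L u').trace := by
    have hgram : Continuous fun x => gram ℂ fun n => u n x :=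
      continuous_matrix fun n m => (cu n).inner (cu m)
    exact (hgram.matrix_mul continuous_const).matrix_trace
  calc ∫ x in (0 : ℝ)..L, gramCube (fun n => u n x)
      ≤ ∫ x in (0 : ℝ)..L, kConst α ^ 2 * (gram ℂ (fun n => u n x) * l2Gram L u').trace.re :=
        intervalIntegral.integral_mono_on hL.le ((continuous_gramCube cu).intervalIntegrable 0 L)
          ((continuous_const.mul (Complex.continuous_re.comp hcont)).intervalIntegrable 0 L)
          fun x _ => gramCube_le_kConst_mul_trace hL hα hu h1 x
    _ = kConst α ^ 2 * (l2Gram L u').trace.re := by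
        rw [intervalIntegral.integral_const_mul]
        congr 1
        have hre := Complex.reCLM.intervalIntegral_comp_comm
          (hcont.intervalIntegrable (μ := volume) 0 L)
        simp only [Complex.reCLM_apply] at hre
        rw [hre, integral_trace_gram_mul cu, h1, Matrix.one_mul]
    _ = _ := by simp only [trace, diag_apply, l2Gram_apply_self, Complex.re_sum, Complex.ofReal_re]

end LiebThirring

section CubicIntegral

/-- The primitive of `t / (1 + t³)²` on `[0, ∞)` whose limit at infinity is `π / (6√3)`. -/
noncomputable def cubicPrimitive (t : ℝ) : ℝ :=
  t ^ 2 / (3 * (1 + t ^ 3)) + 1 / 18 * log (1 - 3 * (t / (1 + t) ^ 2)) +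
    1 / (3 * √3) * arctan ((2 * t - 1) / √3)

lemma one_sub_three_mul_div_add_one_sq {t : ℝ} (ht : 0 ≤ t) :
    1 - 3 * (t / (1 + t) ^ 2) = (1 - t + t ^ 2) / (1 + t) ^ 2 := by
  field_simp
  ring

lemma one_sub_add_sq_pos (t : ℝ) : 0 < 1 - t + t ^ 2 := by nlinarith [sq_nonneg (t - 1)]

lemma hasDerivAt_cubicPrimitive {t : ℝ} (ht : 0 ≤ t) :
    HasDerivAt cubicPrimitive (t / (1 + t ^ 3) ^ 2) t := by
  have hquad := one_sub_add_sq_pos t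
  have hrat : HasDerivAt (fun t : ℝ => t ^ 2 / (3 * (1 + t ^ 3)))
      ((2 * t * (3 * (1 + t ^ 3)) - t ^ 2 * (3 * (3 * t ^ 2))) / (3 * (1 + t ^ 3)) ^ 2) t := by
    have hden : HasDerivAt (fun t : ℝ => 3 * (1 + t ^ 3)) (3 * (3 * t ^ 2)) t := by
      simpa using ((hasDerivAt_pow 3 t).const_add 1).const_mul 3
    exact HasDerivAt.div (by simpa using hasDerivAt_pow 2 t) hden (by positivity)
  have hlog : HasDerivAt (fun t : ℝ => log (1 - 3 * (t / (1 + t) ^ 2)))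
      (-(3 * ((1 * (1 + t) ^ 2 - t * (2 * (1 + t))) / ((1 + t) ^ 2) ^ 2)) /
        (1 - 3 * (t / (1 + t) ^ 2))) t := by
    have hden : HasDerivAt (fun t : ℝ => (1 + t) ^ 2) (2 * (1 + t)) t := by
      simpa using ((hasDerivAt_id' t).const_add 1).fun_pow 2
    refine ((((hasDerivAt_id' t).fun_div hden (by positivity)).const_mul 3).const_sub 1).log ?_
    rw [one_sub_three_mul_div_add_one_sq ht]
    positivity
  have harctan : HasDerivAt (fun t : ℝ => arctan ((2 * t - 1) / √3))
      (1 / (1 + ((2 * t - 1) / √3) ^ 2) * (2 * 1 / √3)) t :=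
    ((((hasDerivAt_id t).const_mul 2).sub_const 1).div_const √3).arctan
  refine ((hrat.add (hlog.const_mul (1 / 18))).add
    (harctan.const_mul (1 / (3 * √3)))).congr_deriv ?_
  have hsqrt : √3 ^ 2 = (3 : ℝ) := sq_sqrt (by norm_num)
  have harctan_eq : 1 / (3 * √3) * (1 / (1 + ((2 * t - 1) / √3) ^ 2) * (2 * 1 / √3)) =
      1 / (6 * (1 - t + t ^ 2)) := by
    have : 3 + (2 * t - 1) ^ 2 ≠ 0 := by positivity
    rw [div_pow, hsqrt]
    field_simp
    rw [hsqrt]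
    ring
  have hfactor : 1 + t ^ 3 = (1 + t) * (1 - t + t ^ 2) := by ring
  rw [harctan_eq, one_sub_three_mul_div_add_one_sq ht, hfactor]
  field_simp
  ring

lemma tendsto_div_atTop_of_le_inv {f : ℝ → ℝ} (h : ∀ t, 0 < t → 0 ≤ f t ∧ f t ≤ t⁻¹) :
    Tendsto f atTop (nhds 0) :=
  squeeze_zero' ((eventually_gt_atTop 0).mono fun t ht => (h t ht).1)
    ((eventually_gt_atTop 0).mono fun t ht => (h t ht).2) tendsto_inv_atTop_zero

lemma tendsto_cubicPrimitive : Tendsto cubicPrimitive atTop (nhds (π / (6 * √3))) := by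
  have hrat : Tendsto (fun t : ℝ => t ^ 2 / (3 * (1 + t ^ 3))) atTop (nhds 0) :=
    tendsto_div_atTop_of_le_inv fun t ht => ⟨by positivity, by
      rw [← one_div, div_le_div_iff₀ (by positivity) ht]; nlinarith [pow_pos ht 3]⟩
  have hlog : Tendsto (fun t : ℝ => log (1 - 3 * (t / (1 + t) ^ 2))) atTop (nhds 0) := by
    have hfrac : Tendsto (fun t : ℝ => t / (1 + t) ^ 2) atTop (nhds 0) :=
      tendsto_div_atTop_of_le_inv fun t ht => ⟨by positivity, by
        rw [← one_div, div_le_div_iff₀ (by positivity) ht]; nlinarith⟩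
    simpa using ((hfrac.const_mul 3).const_sub 1).log (by norm_num)
  have harctan : Tendsto (fun t : ℝ => arctan ((2 * t - 1) / √3)) atTop (nhds (π / 2)) := by
    refine (tendsto_arctan_atTop.mono_right nhdsWithin_le_nhds).comp ?_
    exact ((tendsto_id.const_mul_atTop two_pos).atTop_add
      (tendsto_const_nhds (x := (-1 : ℝ)))).atTop_div_const (by positivity)
  have hlim : 0 + 1 / 18 * 0 + 1 / (3 * √3) * (π / 2) = π / (6 * √3) := by field_simp; ring
  exact hlim ▸ (hrat.add (hlog.const_mul (1 / 18))).add (harctan.const_mul (1 / (3 * √3)))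

lemma cubicPrimitive_zero : cubicPrimitive 0 = -(π / (18 * √3)) := by
  have h : arctan (1 / √3) = π / 6 := by
    rw [← tan_pi_div_six, arctan_tan] <;> linarith [pi_pos]
  have h' : arctan (-1 / √3) = -(π / 6) := by rw [neg_div, arctan_neg, h]
  simp only [cubicPrimitive, mul_zero, zero_div, zero_sub, sub_zero, log_one, h', ne_eq,
    OfNat.ofNat_ne_zero, not_false_eq_true, zero_pow, add_zero]
  field_simp
  ring

lemma integral_div_one_add_cube_sq_le {T : ℝ} (hT : 0 ≤ T) :
    ∫ t in (0 : ℝ)..T, t / (1 + t ^ 3) ^ 2 ≤ 2 * π / (9 * √3) := by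
  have hint : ∀ a b : ℝ, 0 ≤ a → a ≤ b →
      ∫ t in a..b, t / (1 + t ^ 3) ^ 2 = cubicPrimitive b - cubicPrimitive a := by
    intro a b ha hab
    have hpos : ∀ x ∈ Set.uIcc a b, 0 ≤ x := fun x hx =>
      ha.trans (Set.uIcc_of_le hab ▸ hx).1
    refine intervalIntegral.integral_eq_sub_of_hasDerivAt
      (fun x hx => hasDerivAt_cubicPrimitive (hpos x hx)) (ContinuousOn.intervalIntegrable ?_)
    refine ContinuousOn.div (by fun_prop) (by fun_prop) fun x hx => ?_
    have := hpos x hx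
    positivity
  have hle : cubicPrimitive T ≤ π / (6 * √3) := by
    refine ge_of_tendsto tendsto_cubicPrimitive ((eventually_ge_atTop T).mono fun s hs => ?_)
    have hnonneg : 0 ≤ ∫ t in T..s, t / (1 + t ^ 3) ^ 2 :=
      intervalIntegral.integral_nonneg hs fun t ht => by
        have : 0 ≤ t := hT.trans ht.1
        positivity
    linarith [hint T s hT hs]
  have hsum : 2 * π / (9 * √3) = π / (6 * √3) + π / (18 * √3) := by field_simp; ring
  linarith [hint 0 T le_rfl hT, cubicPrimitive_zero]

lemma integral_mul_cube_div_cube_add_cube_sq_le {p B : ℝ} (hp : 0 < p) (hB : 0 ≤ B) :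
    ∫ b in (0 : ℝ)..B, b * (p ^ 3 / (p ^ 3 + b ^ 3)) ^ 2 ≤ p ^ 2 * (2 * π / (9 * √3)) := by
  have hscale : ∀ b ∈ Set.uIcc 0 B,
      b * (p ^ 3 / (p ^ 3 + b ^ 3)) ^ 2 = p * (b / p / (1 + (b / p) ^ 3) ^ 2) := by
    intro b hb
    have : 0 ≤ b := (Set.uIcc_of_le hB ▸ hb).1
    field_simp
  rw [intervalIntegral.integral_congr hscale, intervalIntegral.integral_const_mul,
    intervalIntegral.integral_comp_div (fun t => t / (1 + t ^ 3) ^ 2) hp.ne', zero_div,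
    smul_eq_mul, ← mul_assoc, ← sq]
  exact mul_le_mul_of_nonneg_left (integral_div_one_add_cube_sq_le (by positivity)) (sq_nonneg p)

end CubicIntegral

section Fsum

variable {α : ℝ}

lemma abs_intCast_add_pos (hα : ∀ m : ℤ, α ≠ m) (k : ℤ) : 0 < |(k : ℝ) + α| :=
  abs_pos.2 fun h => hα (-k) (by push_cast; linarith)

lemma summable_inv_cube_add_sq (hα : ∀ m : ℤ, α ≠ m) {b : ℝ} (hb : 0 ≤ b) :
    Summable fun k : ℤ => ((|(k : ℝ) + α| ^ 3 + b) ^ 2)⁻¹ := by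
  have h6 : Summable fun k : ℤ => (|(k : ℝ) + α| ^ 6)⁻¹ := by
    refine ((summable_one_div_int_add_rpow α 6).2 (by norm_num)).congr fun k => ?_
    rw [one_div]
    norm_cast
  refine h6.of_nonneg_of_le (fun k => by positivity) fun k => ?_
  have := abs_intCast_add_pos hα k
  refine inv_anti₀ (by positivity) ?_
  nlinarith [pow_pos this 3]

lemma Fsum_cube {β : ℝ} (hβ : 0 ≤ β) :
    Fsum α (β ^ 3) = β ^ 5 * ∑' k : ℤ, ((|(k : ℝ) + α| ^ 3 + β ^ 3) ^ 2)⁻¹ := by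
  rw [Fsum, ← rpow_natCast, ← rpow_mul hβ, ← rpow_natCast β 5]
  norm_num

lemma Fsum_fract (α b : ℝ) : Fsum (Int.fract α) b = Fsum α b := by
  rw [Fsum, Fsum,
    ← (Equiv.addRight ⌊α⌋).tsum_eq fun k : ℤ => ((|(k : ℝ) + Int.fract α| ^ 3 + b) ^ 2)⁻¹]
  congr! 8 with k
  rw [Equiv.coe_addRight, Int.cast_add, add_assoc, Int.floor_add_fract]

lemma pow_five_mul_inv_cube_add_sq_le {p β : ℝ} (hp : 0 < p) (hβ : 0 < β) :
    β ^ 5 * ((p ^ 3 + β ^ 3) ^ 2)⁻¹ ≤ 1 / p := by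
  rw [← div_eq_mul_inv, div_le_div_iff₀ (by positivity) hp]
  have hcross := mul_pos (pow_pos hp 3) (pow_pos hβ 3)
  rcases le_total p β with h | h
  · have : β ^ 5 * p ≤ β ^ 5 * β := mul_le_mul_of_nonneg_left h (by positivity)
    nlinarith [pow_pos hp 6]
  · have : β ^ 5 * p ≤ p ^ 5 * p :=
      mul_le_mul_of_nonneg_right (pow_le_pow_left₀ hβ.le h 5) hp.le
    nlinarith [pow_pos hβ 6]

lemma pow_five_mul_inv_cube_add_sq_le_telescope {p β : ℝ} {n : ℕ} (hp : (n : ℝ) + 1 ≤ p)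
    (hβ : 0 < β) :
    β ^ 5 * ((p ^ 3 + β ^ 3) ^ 2)⁻¹ ≤ 16 * β * (1 / (n + β) - 1 / ((n + 1 : ℕ) + β)) := by
  have hx : (0 : ℝ) < (n + 1 : ℕ) := by positivity
  rw [← Nat.cast_add_one] at hp
  have hn : (n : ℝ) + β = (n + 1 : ℕ) + β - 1 := by push_cast; ring
  have hn0 : (0 : ℝ) < n + β := by positivity
  generalize ((n + 1 : ℕ) : ℝ) = x at hp hx hn
  have hcube : (x + β) ^ 3 ≤ 4 * (x ^ 3 + β ^ 3) := by
    nlinarith [mul_nonneg (add_pos hx hβ).le (sq_nonneg (x - β))]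
  have hpow : (x + β) ^ 2 * β ^ 4 ≤ 16 * (x ^ 3 + β ^ 3) ^ 2 :=
    calc (x + β) ^ 2 * β ^ 4 ≤ (x + β) ^ 2 * (x + β) ^ 4 := by gcongr; linarith
      _ = ((x + β) ^ 3) ^ 2 := by ring
      _ ≤ (4 * (x ^ 3 + β ^ 3)) ^ 2 := pow_le_pow_left₀ (by positivity) hcube 2
      _ = _ := by ring
  calc β ^ 5 * ((p ^ 3 + β ^ 3) ^ 2)⁻¹ ≤ β ^ 5 * ((x ^ 3 + β ^ 3) ^ 2)⁻¹ := by gcongr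
    _ ≤ 16 * β * (1 / (x + β) ^ 2) := by
        rw [← div_eq_mul_inv, mul_one_div, div_le_div_iff₀ (by positivity) (by positivity)]
        nlinarith
    _ ≤ 16 * β * (1 / (n + β) - 1 / (x + β)) := by
        refine mul_le_mul_of_nonneg_left ?_ (by positivity)
        rw [hn] at hn0 ⊢
        rw [div_sub_div _ _ hn0.ne' (by positivity),
          div_le_div_iff₀ (by positivity) (by positivity)]
        nlinarith

lemma pow_five_mul_tsum_inv_cube_add_sq_le {β : ℝ} (hβ : 0 < β) {p : ℕ → ℝ} (h0 : 0 < p 0)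
    (hp : ∀ n : ℕ, (n : ℝ) + 1 ≤ p (n + 1))
    (hs : Summable fun n => ((p n ^ 3 + β ^ 3) ^ 2)⁻¹) :
    β ^ 5 * ∑' n, ((p n ^ 3 + β ^ 3) ^ 2)⁻¹ ≤ 1 / p 0 + 16 := by
  rw [hs.tsum_eq_zero_add, mul_add, ← tsum_mul_left]
  refine add_le_add (pow_five_mul_inv_cube_add_sq_le h0 hβ)
    (Real.tsum_le_of_sum_range_le (fun n => by positivity) fun m => ?_)
  calc _ ≤ ∑ n ∈ Finset.range m, 16 * β * (1 / ((n : ℝ) + β) - 1 / ((n + 1 : ℕ) + β)) :=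
        Finset.sum_le_sum fun n _ => pow_five_mul_inv_cube_add_sq_le_telescope (hp n) hβ
    _ = 16 * β * (1 / β - 1 / (m + β)) := by
        rw [← Finset.mul_sum, Finset.sum_range_sub' (fun n : ℕ => 1 / ((n : ℝ) + β)) m,
          Nat.cast_zero, zero_add]
    _ ≤ 16 * β * (1 / β) := by
        refine mul_le_mul_of_nonneg_left (sub_le_self _ ?_) ?_ <;> positivity
    _ = 16 := by field_simp

lemma Fsum_cube_le_of_mem_Ioo {a β : ℝ} (ha : a ∈ Set.Ioo 0 1) (hβ : 0 < β) :
    Fsum a (β ^ 3) ≤ (1 / a + 16) + (1 / (1 - a) + 16) := by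
  obtain ⟨ha0, ha1⟩ := ha
  have haZ : ∀ m : ℤ, a ≠ m := by
    rintro m rfl
    norm_cast at ha0 ha1
    omega
  have hs := summable_inv_cube_add_sq haZ (pow_nonneg hβ.le 3)
  have hs1 : Summable fun n : ℕ => ((|((n : ℤ) : ℝ) + a| ^ 3 + β ^ 3) ^ 2)⁻¹ :=
    hs.comp_injective (i := fun n : ℕ => (n : ℤ)) Nat.cast_injective
  have hs2 : Summable fun n : ℕ => ((|((-((n : ℤ) + 1) : ℤ) : ℝ) + a| ^ 3 + β ^ 3) ^ 2)⁻¹ :=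
    hs.comp_injective (i := fun n : ℕ => -((n : ℤ) + 1)) fun x y h => by simpa using h
  rw [Fsum_cube hβ.le, tsum_of_nat_of_neg_add_one
    (f := fun k : ℤ => ((|(k : ℝ) + a| ^ 3 + β ^ 3) ^ 2)⁻¹) hs1 hs2, mul_add]
  refine add_le_add ?_ ?_
  · refine (pow_five_mul_tsum_inv_cube_add_sq_le hβ (p := fun n : ℕ => |((n : ℤ) : ℝ) + a|)
      (by simpa using ha0.ne') (fun n => le_trans ?_ (le_abs_self _)) hs1).trans_eq ?_
    · push_cast; linarith
    · simp [abs_of_pos ha0]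
  · have h0 : |((-(((0 : ℕ) : ℤ) + 1) : ℤ) : ℝ) + a| = 1 - a := by
      rw [abs_of_neg] <;> push_cast <;> linarith
    have h1a : 0 < 1 - a := by linarith
    have h1 : ∀ n : ℕ, (n : ℝ) + 1 ≤ |((-(((n + 1 : ℕ) : ℤ) + 1) : ℤ) : ℝ) + a| := fun n => by
      refine le_trans ?_ (neg_le_abs _)
      push_cast; linarith
    have := pow_five_mul_tsum_inv_cube_add_sq_le hβ
      (p := fun n : ℕ => |((-((n : ℤ) + 1) : ℤ) : ℝ) + a|) (by rw [h0]; exact h1a) h1 hs2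
    rwa [h0] at this

lemma bddAbove_range_Fsum (hα : ∀ m : ℤ, α ≠ m) :
    BddAbove (Set.range fun b : {x : ℝ // 0 ≤ x} => Fsum α b.1) := by
  have hfract : Int.fract α ∈ Set.Ioo 0 1 := ⟨Int.fract_pos.2 (hα _), Int.fract_lt_one α⟩
  refine ⟨max 0 ((1 / Int.fract α + 16) + (1 / (1 - Int.fract α) + 16)), ?_⟩
  rintro _ ⟨⟨b, hb⟩, rfl⟩
  rcases hb.eq_or_lt with rfl | hb
  · refine le_max_of_le_left ?_
    simp only [Fsum, zero_rpow (by norm_num : (5 : ℝ) / 3 ≠ 0), zero_mul, le_refl]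
  · refine le_max_of_le_right ?_
    have hroot : (b ^ ((1 : ℝ) / 3)) ^ 3 = b := by
      rw [← rpow_natCast, ← rpow_mul hb.le]; norm_num
    have := Fsum_cube_le_of_mem_Ioo hfract (rpow_pos_of_pos hb (1 / 3))
    rwa [hroot, Fsum_fract] at this

lemma Fsum_le_supF (hα : ∀ m : ℤ, α ≠ m) {b : ℝ} (hb : 0 ≤ b) : Fsum α b ≤ supF α :=
  le_ciSup (bddAbove_range_Fsum hα) ⟨b, hb⟩

lemma supF_pos (hα : ∀ m : ℤ, α ≠ m) : 0 < supF α := by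
  refine lt_of_lt_of_le ?_ (Fsum_le_supF hα (b := 1) zero_le_one)
  have := (summable_inv_cube_add_sq hα zero_le_one).tsum_pos (fun k => by positivity) 0
    (by positivity)
  rw [Fsum]
  positivity

lemma K2_pos (hα : ∀ m : ℤ, α ≠ m) : 0 < K2 α := by
  have := supF_pos hα
  unfold K2
  positivity

end Fsum

lemma hasSum_intervalIntegral_of_norm_le {κ E : Type*} [Countable κ] [NormedAddCommGroup E]
    [NormedSpace ℝ E] {a b : ℝ} {f : κ → ℝ → E} {F : ℝ → E} {bound : κ → ℝ}
    (hf : ∀ k, Continuous (f k)) (hbound : Summable bound)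
    (hle : ∀ k, ∀ x ∈ Set.uIoc a b, ‖f k x‖ ≤ bound k)
    (hF : ∀ x ∈ Set.uIoc a b, HasSum (fun k => f k x) (F x)) :
    HasSum (fun k => ∫ x in a..b, f k x) (∫ x in a..b, F x) :=
  intervalIntegral.hasSum_integral_of_dominated_convergence (fun k _ => bound k)
    (fun k => (hf k).aestronglyMeasurable) (fun k => ae_of_all _ (hle k))
    (ae_of_all _ fun _ _ => hbound) intervalIntegrable_const (ae_of_all _ hF)

section BlochExp

/-- The Bloch exponential `e^{2πi(k+α)x/L}`; for `k ∈ ℤ` these diagonalise `d/dx` under the Bloch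
condition with flux `α`. -/
noncomputable def blochExp (α L : ℝ) (k : ℤ) (x : ℝ) : ℂ :=
  Complex.exp ((2 * π * (k + α) / L * x : ℝ) * Complex.I)

variable {α L : ℝ}

lemma continuous_blochExp (k : ℤ) : Continuous (blochExp α L k) := by
  unfold blochExp; fun_prop

lemma continuous_conj_blochExp (k : ℤ) : Continuous fun x => conj (blochExp α L k x) :=
  Complex.continuous_conj.comp (continuous_blochExp k)

lemma norm_blochExp (k : ℤ) (x : ℝ) : ‖blochExp α L k x‖ = 1 := Complex.norm_exp_ofReal_mul_I _

lemma conj_blochExp (k : ℤ) (x : ℝ) :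
    conj (blochExp α L k x) = Complex.exp (-((2 * π * (k + α) / L * x : ℝ) * Complex.I)) := by
  rw [blochExp, ← Complex.exp_conj, map_mul, Complex.conj_ofReal,
    Complex.conj_I, mul_neg]

lemma conj_blochExp_mul_self (k : ℤ) (x : ℝ) :
    conj (blochExp α L k x) * blochExp α L k x = 1 := by
  rw [Complex.conj_mul', norm_blochExp, Complex.ofReal_one, one_pow]

lemma hasDerivAt_conj_blochExp (k : ℤ) (x : ℝ) :
    HasDerivAt (fun x => conj (blochExp α L k x))
      (-((2 * π * (k + α) / L : ℝ) * Complex.I) * conj (blochExp α L k x)) x := by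
  simp only [conj_blochExp]
  have hlin : HasDerivAt (fun x : ℝ => -(((2 * π * (k + α) / L * x : ℝ) : ℂ) * Complex.I))
      (-((2 * π * (k + α) / L : ℝ) * Complex.I)) x := by
    simpa using (((hasDerivAt_id' x).const_mul (2 * π * (k + α) / L)).ofReal_comp.mul_const
      Complex.I).fun_neg
  exact hlin.cexp.congr_deriv (mul_comm _ _)

lemma blochExp_add_period (hL : L ≠ 0) (k : ℤ) (x : ℝ) :
    blochExp α L k (x + L) = Complex.exp ((2 * π * α : ℝ) * Complex.I) * blochExp α L k x := by
  have hL' : (L : ℂ) ≠ 0 := by exact_mod_cast hL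
  rw [blochExp, blochExp, ← Complex.exp_add, ← mul_one (Complex.exp (_ + _)),
    ← Complex.exp_int_mul_two_pi_mul_I k, ← Complex.exp_add]
  congr 1
  push_cast
  field_simp
  ring

lemma integral_conj_blochExp_mul_blochExp (hL : L ≠ 0) (j k : ℤ) :
    ∫ t in (0 : ℝ)..L, conj (blochExp α L j t) * blochExp α L k t =
      if k = j then (L : ℂ) else 0 := by
  split_ifs with hjk
  · simp [hjk, conj_blochExp_mul_self]
  have hL' : (L : ℂ) ≠ 0 := by exact_mod_cast hL
  have hexp : ∀ t : ℝ, conj (blochExp α L j t) * blochExp α L k t =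
      Complex.exp (2 * π * Complex.I * ((k : ℂ) - j) / L * t) := by
    intro t
    rw [conj_blochExp, blochExp, ← Complex.exp_add]
    congr 1
    push_cast
    field_simp
    ring
  have hne : 2 * π * Complex.I * ((k : ℂ) - j) / L ≠ 0 := by
    simp [sub_ne_zero.2 (Int.cast_injective.ne hjk), hL, pi_ne_zero]
  have hperiod : 2 * π * Complex.I * ((k : ℂ) - j) / L * L = (k - j : ℤ) * (2 * π * Complex.I) := by
    push_cast
    field_simp
  simp only [hexp]
  rw [integral_exp_mul_complex hne, hperiod, Complex.exp_int_mul_two_pi_mul_I]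
  simp

end BlochExp

section BlochSeries

variable {H : Type*} [NormedAddCommGroup H] [InnerProductSpace ℂ H] {α L : ℝ}

/-- The Fourier coefficients of `φ` on `[0, L]` with respect to the exponentials `blochExp α L`. -/
noncomputable def blochCoeff (α L : ℝ) (φ : ℝ → H) (k : ℤ) : H :=
  (L : ℂ)⁻¹ • ∫ t in (0 : ℝ)..L, conj (blochExp α L k t) • φ t

/-- The Fourier series with coefficients `a` in the exponentials `blochExp α L`. -/
noncomputable def blochSeries (α L : ℝ) (a : ℤ → H) (x : ℝ) : H := ∑' k, blochExp α L k x • a k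

lemma continuous_conj_blochExp_smul {φ : ℝ → H} (hφ : Continuous φ) (k : ℤ) :
    Continuous fun t => conj (blochExp α L k t) • φ t :=
  (continuous_conj_blochExp k).smul hφ

lemma fourier_mul_blochExp_zero (hL : L ≠ 0) (k : ℤ) (x : ℝ) :
    fourier k (x : AddCircle L) * blochExp α L 0 x = blochExp α L k x := by
  have hL' : (L : ℂ) ≠ 0 := by exact_mod_cast hL
  rw [fourier_coe_apply, blochExp, blochExp, ← Complex.exp_add]
  congr 1
  push_cast
  field_simp
  ring

lemma hasSum_blochExp_smul_blochCoeff (hL : 0 < L) {f : ℝ → ℂ} (hf : Continuous f)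
    (hper : ∀ x, f (x + L) = Complex.exp ((2 * π * α : ℝ) * Complex.I) * f x)
    (hsum : Summable (blochCoeff α L f)) (x : ℝ) :
    HasSum (fun k => blochExp α L k x • blochCoeff α L f k) (f x) := by
  have : Fact (0 < L) := ⟨hL⟩
  set g : ℝ → ℂ := fun x => conj (blochExp α L 0 x) * f x with hg
  have hgper : Function.Periodic g L := fun x => by
    simp only [hg]
    rw [blochExp_add_period hL.ne', hper, map_mul, mul_mul_mul_comm, Complex.conj_mul',
      Complex.norm_exp_ofReal_mul_I, Complex.ofReal_one, one_pow, one_mul]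
  set G : C(AddCircle L, ℂ) :=
    ⟨hgper.lift, continuous_coinduced_dom.2 ((continuous_conj_blochExp 0).mul hf)⟩
  have hG : ∀ t : ℝ, G t = g t := hgper.lift_coe
  have hcoeff : fourierCoeff G = blochCoeff α L f := by
    ext k
    rw [fourierCoeff_eq_intervalIntegral G k 0, zero_add, one_div, blochCoeff, ← Complex.ofReal_inv,
      Complex.coe_smul]
    congr 1
    refine intervalIntegral.integral_congr fun t _ => ?_
    simp only [hG, hg, fourier_neg, smul_eq_mul, ← mul_assoc, ← map_mul,
      fourier_mul_blochExp_zero hL.ne']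
  have hpt := (has_pointwise_sum_fourier_series_of_summable (f := G) (hcoeff ▸ hsum) x).mul_left
    (blochExp α L 0 x)
  have hval : f x = blochExp α L 0 x * G x := by
    rw [hG, hg, ← mul_assoc, mul_comm (blochExp _ _ _ _), conj_blochExp_mul_self, one_mul]
  rw [hval]
  refine hpt.congr_fun fun k => ?_
  rw [hcoeff, ← fourier_mul_blochExp_zero hL.ne', smul_eq_mul, smul_eq_mul]
  ring

variable [CompleteSpace H]

lemma map_blochCoeff {E : Type*} [NormedAddCommGroup E] [InnerProductSpace ℂ E]
    [CompleteSpace E] (T : H →L[ℂ] E) {φ : ℝ → H} (hφ : Continuous φ) (k : ℤ) :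
    T (blochCoeff α L φ k) = blochCoeff α L (fun x => T (φ x)) k := by
  have := T.intervalIntegral_comp_comm
    ((continuous_conj_blochExp_smul (α := α) (L := L) hφ k).intervalIntegrable (μ := volume) 0 L)
  simp only [blochCoeff, map_smul, ← this]

lemma blochCoeff_deriv (hL : L ≠ 0) {φ φ' : ℝ → H} (h : IsBloch α L φ φ') (k : ℤ) :
    blochCoeff α L φ' k = (((2 * π * (k + α) / L : ℝ) : ℂ) * Complex.I) • blochCoeff α L φ k := by
  have hparts := intervalIntegral.integral_smul_deriv_eq_deriv_smul (a := 0) (b := L)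
    (fun x _ => hasDerivAt_conj_blochExp (α := α) (L := L) k x) (fun x _ => h.hasDerivAt x)
    (((continuous_conj_blochExp k).const_mul _).intervalIntegrable _ _)
    (h.continuous_deriv.intervalIntegrable _ _)
  have hboundary : conj (blochExp α L k L) • φ L = conj (blochExp α L k 0) • φ 0 := by
    have hexp := blochExp_add_period (α := α) hL k 0
    have hφ := h.map_add_period 0
    rw [zero_add] at hexp hφ
    rw [hexp, hφ, smul_smul, map_mul, mul_right_comm, Complex.conj_mul',
      Complex.norm_exp_ofReal_mul_I, Complex.ofReal_one, one_pow, one_mul]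
  rw [blochCoeff, hparts, hboundary, sub_self, zero_sub, ← intervalIntegral.integral_neg,
    blochCoeff, smul_comm]
  simp only [neg_mul, neg_smul, neg_neg, mul_smul, intervalIntegral.integral_smul]

lemma summable_blochExp_smul {a : ℤ → H} (ha : Summable fun k => ‖a k‖) (x : ℝ) :
    Summable fun k => blochExp α L k x • a k :=
  .of_norm (by simpa only [norm_smul, norm_blochExp, one_mul] using ha)

lemma continuous_blochSeries {a : ℤ → H} (ha : Summable fun k => ‖a k‖) :
    Continuous (blochSeries α L a) :=
  continuous_tsum (fun k => (continuous_blochExp k).smul continuous_const) ha fun k x => by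
    rw [norm_smul, norm_blochExp, one_mul]

lemma blochCoeff_blochSeries (hL : L ≠ 0) {a : ℤ → H} (ha : Summable fun k => ‖a k‖) (j : ℤ) :
    blochCoeff α L (blochSeries α L a) j = a j := by
  have hsum := hasSum_intervalIntegral_of_norm_le (a := 0) (b := L)
    (f := fun k x => conj (blochExp α L j x) • blochExp α L k x • a k)
    (fun k => continuous_conj_blochExp_smul ((continuous_blochExp k).smul continuous_const) j) ha
    (fun k x _ => by rw [norm_smul, norm_smul, RCLike.norm_conj, norm_blochExp,
      norm_blochExp, one_mul, one_mul]) fun x _ => (summable_blochExp_smul ha x).hasSum.const_smul _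
  simp only [smul_smul, intervalIntegral.integral_smul_const,
    integral_conj_blochExp_mul_blochExp hL, ite_smul, zero_smul] at hsum
  have hL' : (L : ℂ) ≠ 0 := by exact_mod_cast hL
  have hj : ∫ t in (0 : ℝ)..L, conj (blochExp α L j t) • blochSeries α L a t = (L : ℂ) • a j :=
    hsum.unique (by simpa using hasSum_single j fun k (hk : k ≠ j) => if_neg hk)
  rw [blochCoeff, hj, inv_smul_smul₀ hL']

lemma inner_blochCoeff (h : H) {φ : ℝ → H} (hφ : Continuous φ) (k : ℤ) :
    ⟪h, blochCoeff α L φ k⟫_ℂ = blochCoeff α L (fun x => ⟪h, φ x⟫_ℂ) k :=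
  map_blochCoeff (innerSL ℂ h) hφ k

lemma hasSum_integral_inner_blochSeries (hL : L ≠ 0) {a : ℤ → H} (ha : Summable fun k => ‖a k‖)
    {φ : ℝ → H} (hφ : Continuous φ) :
    HasSum (fun k => L * ⟪a k, blochCoeff α L φ k⟫_ℂ)
      (∫ x in (0 : ℝ)..L, ⟪blochSeries α L a x, φ x⟫_ℂ) := by
  obtain ⟨C, hC⟩ := (isCompact_uIcc (a := 0) (b := L)).exists_bound_of_continuousOn hφ.continuousOn
  have hcoeff : ∀ k, L * ⟪a k, blochCoeff α L φ k⟫_ℂ =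
      ∫ x in (0 : ℝ)..L, ⟪blochExp α L k x • a k, φ x⟫_ℂ := fun k => by
    rw [inner_blochCoeff _ hφ, blochCoeff, smul_eq_mul, mul_inv_cancel_left₀ (by exact_mod_cast hL)]
    simp only [inner_smul_left, smul_eq_mul]
  simp only [hcoeff]
  refine hasSum_intervalIntegral_of_norm_le (bound := fun k => ‖a k‖ * C)
    (fun k => ((continuous_blochExp k).smul continuous_const).inner hφ) (ha.mul_right C)
    (fun k x hx => (norm_inner_le_norm _ _).trans (by
      rw [norm_smul, norm_blochExp, one_mul]
      exact mul_le_mul_of_nonneg_left (hC x (Set.uIoc_subset_uIcc hx)) (norm_nonneg _)))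
    fun x _ => (innerSLFlip ℂ (φ x)).hasSum (summable_blochExp_smul ha x).hasSum

lemma hasSum_norm_sq_blochSeries (hL : L ≠ 0) {a : ℤ → H} (ha : Summable fun k => ‖a k‖) :
    HasSum (fun k => L * ‖a k‖ ^ 2) (∫ x in (0 : ℝ)..L, ‖blochSeries α L a x‖ ^ 2) := by
  have h := hasSum_integral_inner_blochSeries (α := α) hL ha
    (continuous_blochSeries (α := α) (L := L) ha)
  simp only [blochCoeff_blochSeries hL ha, inner_self_eq_norm_sq_to_K, Complex.coe_algebraMap,
    ← Complex.ofReal_pow, ← Complex.ofReal_mul, intervalIntegral.integral_ofReal] at h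
  exact_mod_cast h

lemma integral_norm_sq_blochSeries_le (hL : 0 < L) {a : ℤ → H} (ha : Summable fun k => ‖a k‖)
    {φ : ℝ → H} (hφ : Continuous φ) (haφ : ∀ k, ⟪a k, blochCoeff α L φ k⟫_ℂ = (‖a k‖ ^ 2 : ℝ)) :
    ∫ x in (0 : ℝ)..L, ‖blochSeries α L a x‖ ^ 2 ≤ ∫ x in (0 : ℝ)..L, ‖φ x‖ ^ 2 := by
  set P : ℝ → H := blochSeries α L a
  have hP : Continuous P := continuous_blochSeries ha
  have hcross : ∫ x in (0 : ℝ)..L, ⟪P x, φ x⟫_ℂ = (∫ x in (0 : ℝ)..L, ‖P x‖ ^ 2 : ℝ) := by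
    refine (hasSum_integral_inner_blochSeries hL.ne' ha hφ).unique ?_
    simp only [haφ, ← Complex.ofReal_mul]
    exact Complex.hasSum_ofReal.2 (hasSum_norm_sq_blochSeries hL.ne' ha)
  have hre : ∫ x in (0 : ℝ)..L, RCLike.re ⟪P x, φ x⟫_ℂ = ∫ x in (0 : ℝ)..L, ‖P x‖ ^ 2 := by
    rw [intervalIntegral.intervalIntegral_re (𝕜 := ℂ) (μ := volume)
      ((hP.inner hφ).intervalIntegrable 0 L), hcross, RCLike.re_to_complex, Complex.ofReal_re]
  have hle : ∫ x in (0 : ℝ)..L, RCLike.re ⟪P x, φ x⟫_ℂ ≤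
      ∫ x in (0 : ℝ)..L, (‖P x‖ ^ 2 + ‖φ x‖ ^ 2) / 2 :=
    intervalIntegral.integral_mono_on hL.le
      (Continuous.intervalIntegrable (by fun_prop) _ _)
      (Continuous.intervalIntegrable (by fun_prop) _ _) fun x _ => by
        nlinarith [re_inner_le_norm (𝕜 := ℂ) (P x) (φ x), two_mul_le_add_sq ‖P x‖ ‖φ x‖]
  rw [hre, intervalIntegral.integral_div, intervalIntegral.integral_add
    (Continuous.intervalIntegrable (by fun_prop) _ _)
    (Continuous.intervalIntegrable (by fun_prop) _ _)] at hle
  linarith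

lemma sum_norm_sq_blochCoeff_le (hL : 0 < L) {φ : ℝ → H} (hφ : Continuous φ) (s : Finset ℤ) :
    ∑ k ∈ s, ‖blochCoeff α L φ k‖ ^ 2 ≤ L⁻¹ * ∫ x in (0 : ℝ)..L, ‖φ x‖ ^ 2 := by
  set c : ℤ → H := fun k => if k ∈ s then blochCoeff α L φ k else 0 with hc
  have hsum : Summable fun k => ‖c k‖ :=
    summable_of_ne_finset_zero (s := s) fun k hk => by simp [hc, hk]
  have hle := integral_norm_sq_blochSeries_le (α := α) hL hsum hφ fun k => by
    by_cases hk : k ∈ s <;> simp [hc, hk, inner_self_eq_norm_sq_to_K]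
  have hnorm : HasSum (fun k => L * ‖c k‖ ^ 2) (∑ k ∈ s, L * ‖c k‖ ^ 2) :=
    hasSum_sum_of_ne_finset_zero fun k hk => by simp [hc, hk]
  rw [(hasSum_norm_sq_blochSeries hL.ne' hsum).unique hnorm, ← Finset.mul_sum,
    Finset.sum_congr rfl fun k hk => by rw [show c k = _ from if_pos hk]] at hle
  rwa [inv_mul_eq_div, le_div_iff₀' hL]

lemma summable_norm_sq_blochCoeff (hL : 0 < L) {φ : ℝ → H} (hφ : Continuous φ) :
    Summable fun k => ‖blochCoeff α L φ k‖ ^ 2 :=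
  summable_of_sum_le (fun _ => by positivity) (sum_norm_sq_blochCoeff_le hL hφ)

lemma tsum_norm_sq_blochCoeff_le (hL : 0 < L) {φ : ℝ → H} (hφ : Continuous φ) :
    ∑' k, ‖blochCoeff α L φ k‖ ^ 2 ≤ L⁻¹ * ∫ x in (0 : ℝ)..L, ‖φ x‖ ^ 2 :=
  (summable_norm_sq_blochCoeff hL hφ).tsum_le_of_sum_le (sum_norm_sq_blochCoeff_le hL hφ)

lemma norm_blochCoeff_deriv (hL : 0 < L) {φ φ' : ℝ → H} (h : IsBloch α L φ φ') (k : ℤ) :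
    ‖blochCoeff α L φ' k‖ = 2 * π / L * (|k + α| * ‖blochCoeff α L φ k‖) := by
  rw [blochCoeff_deriv hL.ne' h, norm_smul, norm_mul, Complex.norm_I, mul_one, Complex.norm_real,
    Real.norm_eq_abs, mul_div_right_comm, abs_mul, abs_of_pos (by positivity), mul_assoc]

lemma summable_inv_add_sq (α : ℝ) : Summable fun k : ℤ => (((k : ℝ) + α) ^ 2)⁻¹ := by
  refine ((summable_one_div_int_add_rpow α 2).2 one_lt_two).congr fun k => ?_
  rw [one_div, rpow_two, sq_abs]

lemma IsBloch.summable_norm_blochCoeff (hL : 0 < L) (hα : ∀ m : ℤ, α ≠ m) {φ φ' : ℝ → H}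
    (h : IsBloch α L φ φ') : Summable fun k => ‖blochCoeff α L φ k‖ := by
  refine (((summable_inv_add_sq α).add ((summable_norm_sq_blochCoeff (α := α) hL
    h.continuous_deriv).mul_left ((L / (2 * π)) ^ 2))).of_nonneg_of_le
    (fun _ => norm_nonneg _) fun k => ?_)
  have hp := abs_intCast_add_pos hα k
  set p : ℝ := |(k : ℝ) + α|
  have hc : ‖blochCoeff α L φ k‖ = p⁻¹ * (L / (2 * π) * ‖blochCoeff α L φ' k‖) := by
    rw [norm_blochCoeff_deriv hL h, ← mul_assoc (L / _), div_mul_div_cancel₀' hL.ne',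
      div_self (by positivity), one_mul, inv_mul_cancel_left₀ hp.ne']
  rw [hc, ← sq_abs ((k : ℝ) + α), ← inv_pow, ← mul_pow]
  nlinarith [sq_nonneg (p⁻¹ - (L / (2 * π) * ‖blochCoeff α L φ' k‖)),
    sq_nonneg p⁻¹, sq_nonneg (L / (2 * π) * ‖blochCoeff α L φ' k‖)]

lemma IsBloch.blochSeries_blochCoeff (hL : 0 < L) (hα : ∀ m : ℤ, α ≠ m) {φ φ' : ℝ → H}
    (h : IsBloch α L φ φ') : blochSeries α L (blochCoeff α L φ) = φ := by
  ext x
  refine ext_inner_left ℂ fun v => ?_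
  have hsum := h.summable_norm_blochCoeff hL hα
  have hser : HasSum (fun k => ⟪v, blochExp α L k x • blochCoeff α L φ k⟫_ℂ)
      ⟪v, blochSeries α L (blochCoeff α L φ) x⟫_ℂ :=
    (innerSL ℂ v).hasSum (summable_blochExp_smul hsum x).hasSum
  simp only [inner_smul_right, inner_blochCoeff _ h.continuous, ← smul_eq_mul] at hser
  refine hser.unique (hasSum_blochExp_smul_blochCoeff hL (continuous_const.inner h.continuous)
    (fun t => by rw [h.map_add_period, inner_smul_right]) ?_ x)
  exact (hsum.of_norm.map (innerSL ℂ v) (innerSL ℂ v).continuous).congr fun k =>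
    inner_blochCoeff v h.continuous k

end BlochSeries

lemma intervalIntegral_swap_of_continuous {f : ℝ → ℝ → ℝ}
    (hf : Continuous fun p : ℝ × ℝ => f p.1 p.2) (a b c d : ℝ) :
    ∫ x in a..b, ∫ y in c..d, f x y = ∫ y in c..d, ∫ x in a..b, f x y :=
  intervalIntegral_intervalIntegral_swap
    ((hf.continuousOn.integrableOn_compact (isCompact_uIcc.prod isCompact_uIcc)).mono_set
      (Set.prod_mono Set.uIoc_subset_uIcc Set.uIoc_subset_uIcc))

lemma norm_tsum_le_sqrt_mul_sqrt {κ E : Type*} [SeminormedAddCommGroup E] {f : κ → E} {s c : κ → ℝ}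
    (hs : Summable fun k => s k ^ 2) (hc : Summable fun k => c k ^ 2)
    (hs0 : ∀ k, 0 ≤ s k) (hc0 : ∀ k, 0 ≤ c k) (hf : ∀ k, ‖f k‖ ≤ s k * c k) :
    ‖∑' k, f k‖ ≤ √(∑' k, s k ^ 2) * √(∑' k, c k ^ 2) := by
  simp only [← rpow_two] at hs hc ⊢
  obtain ⟨hsum, hle⟩ := summable_and_inner_le_Lp_mul_Lq_tsum_of_nonneg HolderConjugate.two_two
    hs0 hc0 hs hc
  rw [← sqrt_eq_rpow, ← sqrt_eq_rpow] at hle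
  exact (tsum_of_norm_bounded hsum.hasSum hf).trans hle

section SqrtIntegral

variable {s t : ℝ}

lemma integral_mul_sub_mul_sqrt_sq (hs : 0 ≤ s) (ht : 0 < t) :
    ∫ β in (0 : ℝ)..(s / t) ^ 2, β * (s - t * √β) ^ 2 = s ^ 6 / (30 * t ^ 4) := by
  have hderiv : ∀ β ∈ Set.Ioo 0 ((s / t) ^ 2), HasDerivAt
      (fun β => s ^ 2 / 2 * β ^ 2 - 4 / 5 * s * t * (√β * β ^ 2) + t ^ 2 / 3 * β ^ 3)
      (β * (s - t * √β) ^ 2) β := by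
    intro β hβ
    have hsqrt : 0 < √β := sqrt_pos.2 hβ.1
    have hsq : √β ^ 2 = β := sq_sqrt hβ.1.le
    have h := (((hasDerivAt_pow 2 β).const_mul (s ^ 2 / 2)).fun_sub
      (((hasDerivAt_sqrt hβ.1.ne').fun_mul (hasDerivAt_pow 2 β)).const_mul (4 / 5 * s * t))).fun_add
      ((hasDerivAt_pow 3 β).const_mul (t ^ 2 / 3))
    refine h.congr_deriv ?_
    have hβ2 : 1 / (2 * √β) * β ^ 2 = √β * β / 2 := by
      field_simp
      linear_combination -β * hsq
    push_cast
    rw [hβ2]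
    linear_combination -β * t ^ 2 * hsq
  rw [intervalIntegral.integral_eq_sub_of_hasDerivAt_of_le (by positivity)
    (Continuous.continuousOn (by fun_prop)) hderiv
    (Continuous.intervalIntegrable (by fun_prop) _ _), sqrt_sq (by positivity)]
  field_simp
  ring

lemma pow_six_div_le_integral_mul_sq (hs : 0 ≤ s) (ht : 0 < t) {B : ℝ} (hB : (s / t) ^ 2 ≤ B)
    {A : ℝ → ℝ} (hA : Continuous A) (hsA : ∀ β, 0 ≤ β → s ≤ t * √β + A β) :
    s ^ 6 / (30 * t ^ 4) ≤ ∫ β in (0 : ℝ)..B, β * A β ^ 2 := by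
  calc s ^ 6 / (30 * t ^ 4) = ∫ β in (0 : ℝ)..(s / t) ^ 2, β * (s - t * √β) ^ 2 :=
        (integral_mul_sub_mul_sqrt_sq hs ht).symm
    _ ≤ ∫ β in (0 : ℝ)..(s / t) ^ 2, β * A β ^ 2 := by
        refine intervalIntegral.integral_mono_on (sq_nonneg _)
          (Continuous.intervalIntegrable (by fun_prop) _ _)
          (Continuous.intervalIntegrable (by fun_prop) _ _) fun β hβ => ?_
        have hsqrt : √β ≤ s / t := sqrt_le_iff.2 ⟨by positivity, hβ.2⟩
        rw [le_div_iff₀ ht] at hsqrt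
        have := hsA β hβ.1
        gcongr
        · exact hβ.1
        · linarith
        · linarith
    _ ≤ ∫ β in (0 : ℝ)..B, β * A β ^ 2 := by
        refine intervalIntegral.integral_mono_interval le_rfl (sq_nonneg _) hB
          ((ae_restrict_mem measurableSet_Ioc).mono fun β hβ => ?_)
          (Continuous.intervalIntegrable (by fun_prop) _ _)
        have := hβ.1
        positivity

end SqrtIntegral

section HighPass

variable {H : Type*} [NormedAddCommGroup H] [InnerProductSpace ℂ H] {α L : ℝ}

/-- The multiplier `|k+α|³ / (|k+α|³ + |β|³)`, suppressing the modes with `|k+α| ≪ β`. The modulus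
of `β` makes it continuous on the whole line. -/
noncomputable def highPass (α β : ℝ) (k : ℤ) : ℝ :=
  |(k : ℝ) + α| ^ 3 / (|(k : ℝ) + α| ^ 3 + |β| ^ 3)

/-- The high-frequency part of `φ` at scale `β`. -/
noncomputable def highPart (α L : ℝ) (φ : ℝ → H) (β : ℝ) : ℝ → H :=
  blochSeries α L fun k => (highPass α β k : ℂ) • blochCoeff α L φ k

lemma highPass_nonneg (α β : ℝ) (k : ℤ) : 0 ≤ highPass α β k := by unfold highPass; positivity

lemma highPass_le_one (α β : ℝ) (k : ℤ) : highPass α β k ≤ 1 :=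
  div_le_one_of_le₀ (le_add_of_nonneg_right (by positivity)) (by positivity)

lemma continuous_highPass (hα : ∀ m : ℤ, α ≠ m) (k : ℤ) : Continuous fun β => highPass α β k := by
  have := abs_intCast_add_pos hα k
  exact continuous_const.div (by fun_prop) fun β => by positivity

lemma norm_highPass_smul_le (β : ℝ) (k : ℤ) (v : H) : ‖(highPass α β k : ℂ) • v‖ ≤ ‖v‖ := by
  rw [norm_smul, Complex.norm_real, norm_of_nonneg (highPass_nonneg α β k)]
  exact mul_le_of_le_one_left (norm_nonneg v) (highPass_le_one α β k)

lemma summable_norm_highPass_smul {a : ℤ → H} (ha : Summable fun k => ‖a k‖) (β : ℝ) :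
    Summable fun k => ‖(highPass α β k : ℂ) • a k‖ :=
  ha.of_nonneg_of_le (fun _ => norm_nonneg _) fun _ => norm_highPass_smul_le β _ _

lemma hasSum_one_sub_highPass_sq (hα : ∀ m : ℤ, α ≠ m) {β : ℝ} (hβ : 0 ≤ β) :
    HasSum (fun k => (1 - highPass α β k) ^ 2) (β * Fsum α (β ^ 3)) := by
  have h := (summable_inv_cube_add_sq hα (pow_nonneg hβ 3)).hasSum.mul_left (β ^ 6)
  rw [Fsum_cube hβ, ← mul_assoc, ← pow_succ']
  refine h.congr_fun fun k => ?_
  have := abs_intCast_add_pos hα k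
  rw [highPass, abs_of_nonneg hβ, one_sub_div (by positivity), add_sub_cancel_left, div_pow,
    ← pow_mul, div_eq_mul_inv]

lemma blochCoeff_rotate {ι : Type*} [Fintype ι] {u : ι → ℝ → H} (hu : ∀ n, Continuous (u n))
    (U : Matrix ι ι ℂ) (i : ι) (k : ℤ) :
    blochCoeff α L (rotate U u i) k = rotate U (fun n => blochCoeff α L (u n) k) i := by
  have hint : ∀ n ∈ Finset.univ, IntervalIntegrable
      (fun t => U n i • conj (blochExp α L k t) • u n t) volume 0 L := fun n _ =>
    ((continuous_conj_blochExp_smul (hu n) k).const_smul _).intervalIntegrable _ _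
  simp only [blochCoeff, rotate_apply]
  simp only [rotate, Finset.smul_sum, smul_comm _ (U _ _)]
  rw [intervalIntegral.integral_finsetSum hint, Finset.smul_sum]
  simp only [intervalIntegral.integral_smul, smul_comm _ (U _ _)]

variable [CompleteSpace H]

lemma IsBloch.continuous_highPart (hL : 0 < L) (hα : ∀ m : ℤ, α ≠ m) {φ φ' : ℝ → H}
    (h : IsBloch α L φ φ') : Continuous fun p : ℝ × ℝ => highPart α L φ p.1 p.2 := by
  refine continuous_tsum (fun k => ?_) (h.summable_norm_blochCoeff hL hα) fun k p => ?_
  · exact ((continuous_blochExp k).comp continuous_snd).smul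
      ((Complex.continuous_ofReal.comp ((continuous_highPass hα k).comp continuous_fst)).smul
        continuous_const)
  · rw [norm_smul, norm_blochExp, one_mul]
    exact norm_highPass_smul_le _ _ _

lemma highPart_rotate (hL : 0 < L) (hα : ∀ m : ℤ, α ≠ m) {ι : Type*} [Fintype ι]
    {u u' : ι → ℝ → H} (hu : ∀ n, IsBloch α L (u n) (u' n)) (U : Matrix ι ι ℂ) (i : ι) (β x : ℝ) :
    highPart α L (rotate U u i) β x = rotate U (fun n => highPart α L (u n) β x) i := by
  have hsum := fun n => summable_blochExp_smul (α := α) (L := L)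
    (summable_norm_highPass_smul (α := α) ((hu n).summable_norm_blochCoeff hL hα) β) x
  simp only [highPart, blochSeries, blochCoeff_rotate fun n => (hu n).continuous]
  simp only [rotate, Finset.smul_sum, smul_comm _ (U _ _)]
  rw [Summable.tsum_finsetSum fun n _ => (hsum n).const_smul _]
  exact Finset.sum_congr rfl fun n _ => (hsum n).tsum_const_smul _

lemma IsBloch.sub_highPart (hL : 0 < L) (hα : ∀ m : ℤ, α ≠ m) {φ φ' : ℝ → H}
    (h : IsBloch α L φ φ') (β x : ℝ) : φ x - highPart α L φ β x =
      ∑' k, blochExp α L k x • ((1 - highPass α β k : ℝ) : ℂ) • blochCoeff α L φ k := by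
  have hsum := h.summable_norm_blochCoeff hL hα
  have hφ : HasSum (fun k => blochExp α L k x • blochCoeff α L φ k) (φ x) := by
    have hser := (summable_blochExp_smul (α := α) (L := L) hsum x).hasSum
    rwa [← blochSeries, h.blochSeries_blochCoeff hL hα] at hser
  refine ((hφ.sub (summable_blochExp_smul
    (summable_norm_highPass_smul hsum β) x).hasSum).congr_fun fun k => ?_).tsum_eq.symm
  rw [Complex.ofReal_sub, Complex.ofReal_one, sub_smul, one_smul, smul_sub]

lemma IsBloch.norm_sub_highPart_le (hL : 0 < L) (hα : ∀ m : ℤ, α ≠ m) {φ φ' : ℝ → H}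
    (h : IsBloch α L φ φ') {β : ℝ} (hβ : 0 ≤ β) (x : ℝ) :
    ‖φ x - highPart α L φ β x‖ ≤ √(supF α / L * ∫ t in (0 : ℝ)..L, ‖φ t‖ ^ 2) * √β := by
  have hlow := hasSum_one_sub_highPass_sq hα hβ
  calc ‖φ x - highPart α L φ β x‖
      ≤ √(∑' k, (1 - highPass α β k) ^ 2) * √(∑' k, ‖blochCoeff α L φ k‖ ^ 2) := by
        rw [h.sub_highPart hL hα]
        refine norm_tsum_le_sqrt_mul_sqrt hlow.summable
          (summable_norm_sq_blochCoeff hL h.continuous)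
          (fun k => sub_nonneg.2 (highPass_le_one α β k)) (fun _ => norm_nonneg _) fun k => ?_
        rw [norm_smul, norm_smul, norm_blochExp, one_mul, Complex.norm_real,
          norm_of_nonneg (sub_nonneg.2 (highPass_le_one α β k))]
    _ ≤ √(β * supF α) * √(L⁻¹ * ∫ t in (0 : ℝ)..L, ‖φ t‖ ^ 2) := by
        rw [hlow.tsum_eq]
        gcongr
        · exact Fsum_le_supF hα (pow_nonneg hβ 3)
        · exact tsum_norm_sq_blochCoeff_le hL h.continuous
    _ = _ := by
        have := (supF_pos hα).le
        rw [← sqrt_mul (by positivity), ← sqrt_mul' _ hβ]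
        congr 1
        ring

lemma IsBloch.norm_pow_six_le (hL : 0 < L) (hα : ∀ m : ℤ, α ≠ m) {φ φ' : ℝ → H}
    (h : IsBloch α L φ φ') (h1 : ∫ t in (0 : ℝ)..L, ‖φ t‖ ^ 2 = 1) {B x : ℝ}
    (hB : ‖φ x‖ ^ 2 / (supF α / L) ≤ B) :
    ‖φ x‖ ^ 6 ≤ 30 * (supF α / L) ^ 2 * ∫ β in (0 : ℝ)..B, β * ‖highPart α L φ β x‖ ^ 2 := by
  have hF := div_pos (supF_pos hα) hL
  have hsq : √(supF α / L) ^ 2 = supF α / L := sq_sqrt hF.le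
  have hA : Continuous fun β => ‖highPart α L φ β x‖ :=
    ((h.continuous_highPart hL hα).comp (by fun_prop : Continuous fun β => (β, x))).norm
  have hint := pow_six_div_le_integral_mul_sq (norm_nonneg (φ x)) (sqrt_pos.2 hF) (B := B)
    (by rwa [div_pow, hsq]) hA fun β hβ => ?_
  · rw [div_le_iff₀ (by positivity)] at hint
    rw [← hsq]
    linarith
  · have hlow := h.norm_sub_highPart_le hL hα hβ x
    rw [h1, mul_one] at hlow
    linarith [norm_sub_norm_le (φ x) (highPart α L φ β x)]

lemma integral_mul_highPass_sq_le (hα : ∀ m : ℤ, α ≠ m) {B : ℝ} (hB : 0 ≤ B) (k : ℤ) :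
    ∫ β in (0 : ℝ)..B, β * highPass α β k ^ 2 ≤ |(k : ℝ) + α| ^ 2 * (2 * π / (9 * √3)) := by
  refine le_of_eq_of_le (intervalIntegral.integral_congr fun β hβ => ?_)
    (integral_mul_cube_div_cube_add_cube_sq_le (abs_intCast_add_pos hα k) hB)
  rw [Set.uIcc_of_le hB] at hβ
  simp only [highPass, abs_of_nonneg hβ.1]

lemma IsBloch.integral_mul_integral_norm_sq_highPart_le (hL : 0 < L) (hα : ∀ m : ℤ, α ≠ m)
    {φ φ' : ℝ → H} (h : IsBloch α L φ φ') {B : ℝ} (hB : 0 ≤ B) :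
    ∫ β in (0 : ℝ)..B, β * ∫ x in (0 : ℝ)..L, ‖highPart α L φ β x‖ ^ 2 ≤
      2 * π / (9 * √3) * (L / (2 * π)) ^ 2 * ∫ x in (0 : ℝ)..L, ‖φ' x‖ ^ 2 := by
  set c := blochCoeff α L φ
  have hparseval : ∀ β, HasSum (fun k => L * ‖c k‖ ^ 2 * (β * highPass α β k ^ 2))
      (β * ∫ x in (0 : ℝ)..L, ‖highPart α L φ β x‖ ^ 2) := fun β => by
    refine ((hasSum_norm_sq_blochSeries hL.ne' (summable_norm_highPass_smul
      (h.summable_norm_blochCoeff hL hα) β)).mul_left β).congr_fun fun k => ?_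
    rw [norm_smul, Complex.norm_real, norm_of_nonneg (highPass_nonneg α β k)]
    ring
  have hint : HasSum (fun k => L * ‖c k‖ ^ 2 * ∫ β in (0 : ℝ)..B, β * highPass α β k ^ 2)
      (∫ β in (0 : ℝ)..B, β * ∫ x in (0 : ℝ)..L, ‖highPart α L φ β x‖ ^ 2) := by
    have hconst := fun k => intervalIntegral.integral_const_mul (μ := volume) (a := 0) (b := B)
      (L * ‖c k‖ ^ 2) fun β => β * highPass α β k ^ 2
    simp only [← hconst]
    refine hasSum_intervalIntegral_of_norm_le (bound := fun k => L * ‖c k‖ ^ 2 * B)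
      (fun k => ((continuous_id.mul ((continuous_highPass hα k).pow 2)).const_mul _))
      (((summable_norm_sq_blochCoeff hL h.continuous).mul_left L).mul_right B)
      (fun k β hβ => ?_) fun β _ => hparseval β
    rw [Set.uIoc_of_le hB] at hβ
    have hr := highPass_nonneg α β k
    have hr1 := pow_le_one₀ (n := 2) hr (highPass_le_one α β k)
    rw [norm_of_nonneg (by have := hβ.1; positivity)]
    gcongr
    exact (mul_le_of_le_one_right hβ.1.le hr1).trans hβ.2
  have hderiv := (summable_norm_sq_blochCoeff (α := α) hL h.continuous_deriv).hasSum.mul_left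
    (2 * π / (9 * √3) * (L / (2 * π)) ^ 2 * L)
  calc _ ≤ 2 * π / (9 * √3) * (L / (2 * π)) ^ 2 * L * ∑' k, ‖blochCoeff α L φ' k‖ ^ 2 :=
        hasSum_le (fun k => ?_) hint hderiv
    _ ≤ 2 * π / (9 * √3) * (L / (2 * π)) ^ 2 * L * (L⁻¹ * ∫ x in (0 : ℝ)..L, ‖φ' x‖ ^ 2) := by
        gcongr
        exact tsum_norm_sq_blochCoeff_le hL h.continuous_deriv
    _ = _ := by rw [mul_assoc _ L, mul_inv_cancel_left₀ hL.ne']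
  calc _ ≤ L * ‖c k‖ ^ 2 * (|(k : ℝ) + α| ^ 2 * (2 * π / (9 * √3))) := by
        gcongr
        exact integral_mul_highPass_sq_le hα hB k
    _ = _ := by
        rw [norm_blochCoeff_deriv hL h]
        field_simp
        rw [mul_comm]

lemma gramCube_le_integral_highPart {ι : Type*} [Fintype ι] [DecidableEq ι] {u u' : ι → ℝ → H}
    (hL : 0 < L) (hα : ∀ m : ℤ, α ≠ m) (hu : ∀ n, IsBloch α L (u n) (u' n))
    (h1 : l2Gram L u = 1) {B x : ℝ} (hB : (∑ n, ‖u n x‖ ^ 2) / (supF α / L) ≤ B) :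
    gramCube (fun n => u n x) ≤ 30 * (supF α / L) ^ 2 *
      ∑ n, ∫ β in (0 : ℝ)..B, β * ‖highPart α L (u n) β x‖ ^ 2 := by
  obtain ⟨U, hU, horth⟩ := exists_unitary_rotate_orthogonal fun n => u n x
  have hw := IsBloch.rotate hu U
  have hnorm := integral_norm_sq_eq_one
    (l2Gram_rotate_eq_one (fun n => (hu n).continuous) h1 hU)
  have hF := div_pos (supF_pos hα) hL
  have hcont : ∀ {φ φ' : ℝ → H}, IsBloch α L φ φ' → IntervalIntegrable
      (fun β => β * ‖highPart α L φ β x‖ ^ 2) volume 0 B := fun h =>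
    (continuous_id.mul (((h.continuous_highPart hL hα).comp
      (by fun_prop : Continuous fun β => (β, x))).norm.pow 2)).intervalIntegrable _ _
  calc gramCube (fun n => u n x) = ∑ i, ‖rotate U u i x‖ ^ 6 := by
        simp only [rotate_apply, ← gramCube_of_orthogonal horth, gramCube_rotate hU]
    _ ≤ ∑ i, 30 * (supF α / L) ^ 2 *
          ∫ β in (0 : ℝ)..B, β * ‖highPart α L (rotate U u i) β x‖ ^ 2 := by
        refine Finset.sum_le_sum fun i _ => (hw i).norm_pow_six_le hL hα (hnorm i) (hB.trans' ?_)
        rw [← sum_norm_sq_rotate hU, rotate_apply]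
        gcongr
        exact Finset.single_le_sum (f := fun i => ‖rotate U (fun n => u n x) i‖ ^ 2)
          (fun _ _ => by positivity) (Finset.mem_univ i)
    _ = _ := by
        rw [← Finset.mul_sum, ← intervalIntegral.integral_finsetSum fun i _ => hcont (hw i),
          ← intervalIntegral.integral_finsetSum fun n _ => hcont (hu n)]
        simp only [← Finset.mul_sum, highPart_rotate hL hα hu, sum_norm_sq_rotate hU]

theorem liebThirringIneq_K2 (hL : 0 < L) (hα : ∀ m : ℤ, α ≠ m) :
    LiebThirringIneq H (K2 α) α L := by
  intro ι _ _ u u' hu h1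
  have cu := fun n => (hu n).continuous
  obtain ⟨M, hM⟩ := (isCompact_Icc (a := 0) (b := L)).bddAbove_image
    (f := fun x => ∑ n, ‖u n x‖ ^ 2) (Continuous.continuousOn (by fun_prop))
  have hF := div_pos (supF_pos hα) hL
  set B := M / (supF α / L)
  have hB : ∀ x ∈ Set.Icc 0 L, (∑ n, ‖u n x‖ ^ 2) / (supF α / L) ≤ B := fun x hx => by
    exact div_le_div_of_nonneg_right (hM (Set.mem_image_of_mem _ hx)) hF.le
  have hB0 : 0 ≤ B := le_trans (by positivity) (hB 0 ⟨le_rfl, hL.le⟩)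
  have hcont : ∀ n, Continuous fun p : ℝ × ℝ => p.2 * ‖highPart α L (u n) p.2 p.1‖ ^ 2 :=
    fun n => continuous_snd.mul
      ((((hu n).continuous_highPart hL hα).comp continuous_swap).norm.pow 2)
  have hcont' : ∀ n, Continuous fun x => ∫ β in (0 : ℝ)..B, β * ‖highPart α L (u n) β x‖ ^ 2 :=
    fun n => intervalIntegral.continuous_parametric_intervalIntegral_of_continuous' (hcont n) 0 B
  calc ∫ x in (0 : ℝ)..L, gramCube (fun n => u n x)
      ≤ ∫ x in (0 : ℝ)..L, 30 * (supF α / L) ^ 2 *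
          ∑ n, ∫ β in (0 : ℝ)..B, β * ‖highPart α L (u n) β x‖ ^ 2 :=
        intervalIntegral.integral_mono_on hL.le ((continuous_gramCube cu).intervalIntegrable 0 L)
          (Continuous.intervalIntegrable (by fun_prop) _ _)
          fun x hx => gramCube_le_integral_highPart hL hα hu h1 (hB x hx)
    _ = 30 * (supF α / L) ^ 2 *
          ∑ n, ∫ β in (0 : ℝ)..B, β * ∫ x in (0 : ℝ)..L, ‖highPart α L (u n) β x‖ ^ 2 := by
        rw [intervalIntegral.integral_const_mul, intervalIntegral.integral_finsetSum
          fun n _ => (hcont' n).intervalIntegrable _ _]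
        simp only [fun n => intervalIntegral_swap_of_continuous
          (f := fun x β => β * ‖highPart α L (u n) β x‖ ^ 2) (hcont n) 0 L 0 B,
          intervalIntegral.integral_const_mul]
    _ ≤ 30 * (supF α / L) ^ 2 * ∑ n, 2 * π / (9 * √3) * (L / (2 * π)) ^ 2 *
          ∫ x in (0 : ℝ)..L, ‖u' n x‖ ^ 2 := by
        gcongr with n
        exact (hu n).integral_mul_integral_norm_sq_highPart_le hL hα hB0
    _ = K2 α * ∑ n, ∫ x in (0 : ℝ)..L, ‖u' n x‖ ^ 2 := by
        rw [← Finset.mul_sum, ← mul_assoc, K2]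
        congr 1
        field_simp
        ring

end HighPass

lemma Kmin_pos {α : ℝ} (hα : ∀ m : ℤ, α ≠ m) : 0 < Kmin α :=
  lt_min (pow_pos (kConst_pos hα) 2) (K2_pos hα)

theorem liebThirringIneq_Kmin {H : Type*} [NormedAddCommGroup H] [InnerProductSpace ℂ H]
    [CompleteSpace H] {α L : ℝ} (hL : 0 < L) (hα : ∀ m : ℤ, α ≠ m) :
    LiebThirringIneq H (Kmin α) α L := by
  rcases min_choice (kConst α ^ 2) (K2 α) with h | h <;> rw [Kmin, h]
  exacts [liebThirringIneq_kConst_sq hL hα, liebThirringIneq_K2 hL hα]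

section Layer

lemma integral_sqrt_one_sub_sq_pow_three : ∫ t in (0 : ℝ)..1, √(1 - t ^ 2) ^ 3 = 3 * π / 16 := by
  have hderiv : ∀ t ∈ Set.Ioo (0 : ℝ) 1, HasDerivAt
      (fun t => t * (5 - 2 * t ^ 2) / 8 * √(1 - t ^ 2) + 3 / 8 * arcsin t)
      (√(1 - t ^ 2) ^ 3) t := by
    intro t ht
    have hpos : 0 < 1 - t ^ 2 := by nlinarith only [ht.1, ht.2]
    have hpoly : HasDerivAt (fun t : ℝ => t * (5 - 2 * t ^ 2) / 8) ((5 - 6 * t ^ 2) / 8) t :=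
      (((hasDerivAt_id' t).fun_mul (((hasDerivAt_pow 2 t).const_mul 2).const_sub 5)).div_const
        8).congr_deriv (by push_cast; ring)
    have hsqrt : HasDerivAt (fun t : ℝ => √(1 - t ^ 2)) (-(2 * t) / (2 * √(1 - t ^ 2))) t :=
      HasDerivAt.sqrt (((hasDerivAt_pow 2 t).const_sub 1).congr_deriv (by push_cast; ring)) hpos.ne'
    have harcsin := (hasDerivAt_arcsin (x := t) (by linarith [ht.1]) ht.2.ne).const_mul (3 / 8)
    refine ((hpoly.fun_mul hsqrt).fun_add harcsin).congr_deriv ?_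
    have hz : 0 < √(1 - t ^ 2) := sqrt_pos.2 hpos
    have hsq := sq_sqrt hpos.le
    set z := √(1 - t ^ 2)
    field_simp
    rw [show t ^ 2 = 1 - z ^ 2 by linarith only [hsq]]
    ring
  rw [intervalIntegral.integral_eq_sub_of_hasDerivAt_of_le zero_le_one
    (Continuous.continuousOn (by have := continuous_arcsin; fun_prop)) hderiv
    (Continuous.intervalIntegrable (by fun_prop) _ _)]
  simp only [arcsin_one, arcsin_zero, one_pow, sub_self, sqrt_zero]
  ring

lemma integral_sqrt_one_sub_sq_pow_three_le (T : ℝ) :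
    ∫ t in (0 : ℝ)..T, √(1 - t ^ 2) ^ 3 ≤ 3 * π / 16 := by
  have hint : ∀ a b : ℝ, IntervalIntegrable (fun t => √(1 - t ^ 2) ^ 3) volume a b :=
    fun a b => Continuous.intervalIntegrable (by fun_prop) a b
  rw [← integral_sqrt_one_sub_sq_pow_three,
    ← intervalIntegral.integral_add_adjacent_intervals (hint 0 1) (hint 1 T)]
  refine add_le_of_nonpos_right ?_
  rcases le_total T 1 with hT | hT
  · rw [intervalIntegral.integral_symm]
    exact neg_nonpos.2 (intervalIntegral.integral_nonneg hT fun t _ => by positivity)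
  · refine (intervalIntegral.integral_congr (g := 0) fun t ht => ?_).trans_le (by simp)
    rw [Set.uIcc_of_le hT] at ht
    simp only [sqrt_eq_zero_of_nonpos (show 1 - t ^ 2 ≤ 0 by nlinarith only [ht.1]), Pi.zero_apply,
      ne_eq, OfNat.ofNat_ne_zero, not_false_eq_true, zero_pow]

lemma integral_sqrt_sub_mul_sq_pow_three_le {V κ : ℝ} (hV : 0 ≤ V) (hκ : 0 < κ) (S : ℝ) :
    ∫ s in (0 : ℝ)..S, √(V - κ * s ^ 2) ^ 3 ≤ V ^ 2 / √κ * (3 * π / 16) := by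
  rcases hV.eq_or_lt with rfl | hV
  · have hzero : ∀ s, √(0 - κ * s ^ 2) = 0 := fun s =>
      sqrt_eq_zero_of_nonpos (by rw [zero_sub, neg_nonpos]; positivity)
    simp only [hzero]
    simp
  obtain ⟨r, hr, rfl⟩ : ∃ r, 0 < r ∧ r ^ 2 = V := ⟨√V, sqrt_pos.2 hV, sq_sqrt hV.le⟩
  obtain ⟨m, hm, rfl⟩ : ∃ m, 0 < m ∧ m ^ 2 = κ := ⟨√κ, sqrt_pos.2 hκ, sq_sqrt hκ.le⟩
  have hscale : ∀ s,
      √(r ^ 2 - m ^ 2 * s ^ 2) ^ 3 = r ^ 3 * √(1 - (m / r * s) ^ 2) ^ 3 := fun s => by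
    rw [show r ^ 2 - m ^ 2 * s ^ 2 = r ^ 2 * (1 - (m / r * s) ^ 2) by field_simp,
      sqrt_mul (sq_nonneg r), sqrt_sq hr.le, mul_pow]
  simp only [hscale]
  rw [intervalIntegral.integral_const_mul, intervalIntegral.integral_comp_mul_left
    (fun t => √(1 - t ^ 2) ^ 3) (by positivity : m / r ≠ 0), mul_zero, smul_eq_mul, sqrt_sq hm.le]
  calc _ ≤ r ^ 3 * ((m / r)⁻¹ * (3 * π / 16)) := by
        gcongr; exact integral_sqrt_one_sub_sq_pow_three_le _
    _ = _ := by field_simp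

/- Young's inequality with exponents `3` and `3 / 2`. -/
lemma mul_le_mul_pow_three_add_mul_sqrt_pow_three {f η : ℝ} (hf : 0 ≤ f) (hη : 0 < η) (v : ℝ) :
    f * v ≤ η * f ^ 3 + 2 / (3 * √(3 * η)) * √v ^ 3 := by
  have hm : 0 < √(3 * η) := by positivity
  have hm2 : √(3 * η) ^ 2 = 3 * η := sq_sqrt (by positivity)
  have hz : 0 ≤ √v := sqrt_nonneg v
  have hv : v ≤ √v ^ 2 := (sqrt_le_iff.1 le_rfl).2
  set m := √(3 * η)
  set z := √v
  have hfactor : η * f ^ 3 + 2 / (3 * m) * z ^ 3 - f * z ^ 2 =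
      (m * f - z) ^ 2 * (m * f + 2 * z) / (3 * m) := by
    rw [show η = m ^ 2 / 3 by linarith only [hm2]]
    field_simp
    ring
  have hpos : 0 ≤ (m * f - z) ^ 2 * (m * f + 2 * z) / (3 * m) := by positivity
  linarith only [mul_le_mul_of_nonneg_left hv hf, hfactor, hpos]

variable {ι : Type*} [Fintype ι] {a lam : ι → ℝ}

/-- The density of the levels lying above height `s`: the total weight `a i` of the indices with
`s ≤ lam i`. Integrating over `s ≥ 0` recovers `∑ i, a i * lam i`. -/
noncomputable def levelSum (a lam : ι → ℝ) (s : ℝ) : ℝ := ∑ i with s ≤ lam i, a i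

lemma levelSum_nonneg (ha : ∀ i, 0 ≤ a i) (s : ℝ) : 0 ≤ levelSum a lam s :=
  Finset.sum_nonneg fun i _ => ha i

lemma antitone_levelSum (ha : ∀ i, 0 ≤ a i) : Antitone (levelSum a lam) := fun _ _ hst =>
  Finset.sum_le_sum_of_subset_of_nonneg
    (Finset.monotone_filter_right _ fun _ _ hi => hst.trans hi) fun i _ _ => ha i

lemma antitone_levelSum_pow_three (ha : ∀ i, 0 ≤ a i) : Antitone fun s => levelSum a lam s ^ 3 :=
  fun _ _ hst => pow_le_pow_left₀ (levelSum_nonneg ha _) (antitone_levelSum ha hst) 3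

lemma integral_levelSum_mul {S : ℝ} (hlam : ∀ i, lam i ∈ Set.Icc 0 S) {p : ℝ → ℝ}
    (hp : Continuous p) :
    ∫ s in (0 : ℝ)..S, levelSum a lam s * p s = ∑ i, a i * ∫ s in (0 : ℝ)..lam i, p s := by
  have hind : ∀ s, levelSum a lam s * p s = ∑ i, a i * {s | s ≤ lam i}.indicator p s := fun s => by
    simp only [levelSum, Finset.sum_mul, Finset.sum_filter, Set.indicator, Set.mem_ofPred_eq,
      mul_ite, mul_zero, ite_mul, zero_mul]
  simp only [hind]
  rw [intervalIntegral.integral_finsetSum fun i _ => IntervalIntegrable.const_mul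
    (((hp.continuousOn.integrableOn_compact isCompact_uIcc).indicator (t := {s | s ≤ lam i})
      measurableSet_Iic).intervalIntegrable (μ := volume)) _]
  refine Finset.sum_congr rfl fun i _ => ?_
  rw [intervalIntegral.integral_const_mul, intervalIntegral.integral_indicator (hlam i)]

lemma integral_levelSum_mul_sub_sq {S : ℝ} (hlam : ∀ i, lam i ∈ Set.Icc 0 S) (V κ : ℝ) :
    ∫ s in (0 : ℝ)..S, levelSum a lam s * (V - 3 * κ * s ^ 2) =
      V * ∑ i, a i * lam i - κ * ∑ i, a i * lam i ^ 3 := by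
  rw [integral_levelSum_mul hlam (by fun_prop), Finset.mul_sum, Finset.mul_sum,
    ← Finset.sum_sub_distrib]
  refine Finset.sum_congr rfl fun i _ => ?_
  rw [intervalIntegral.integral_sub intervalIntegrable_const
    (Continuous.intervalIntegrable (by fun_prop) _ _), intervalIntegral.integral_const_mul (3 * κ),
    integral_pow, intervalIntegral.integral_const, smul_eq_mul]
  push_cast
  ring

/- The density `∑ i, a i * lam i` is `∫ levelSum ds`. Pairing `levelSum` with the parabola
`V - 3 κ s²`, where `V` is the optimal multiple of the density, and applying Young's inequality
under the integral gives the bound. -/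
lemma mul_sq_sum_mul_le_integral_levelSum_pow_three (ha : ∀ i, 0 ≤ a i) {S : ℝ} (hS : 0 ≤ S)
    (hlam : ∀ i, lam i ∈ Set.Icc 0 S) {η κ : ℝ} (hη : 0 < η) (hκ : 0 < κ) :
    6 * √(η * κ) / π * (∑ i, a i * lam i) ^ 2 ≤
      η * (∫ s in (0 : ℝ)..S, levelSum a lam s ^ 3) + κ * ∑ i, a i * lam i ^ 3 := by
  have hρ : 0 ≤ ∑ i, a i * lam i := Finset.sum_nonneg fun i _ => mul_nonneg (ha i) (hlam i).1
  set ρ := ∑ i, a i * lam i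
  set V := 12 * √(η * κ) / π * ρ with hVdef
  have hV : 0 ≤ V := by positivity
  have hint3 : IntervalIntegrable (fun s => levelSum a lam s ^ 3) volume 0 S :=
    (antitone_levelSum_pow_three ha).intervalIntegrable
  have hsqrt : IntervalIntegrable (fun s => √(V - 3 * κ * s ^ 2) ^ 3) volume 0 S :=
    Continuous.intervalIntegrable (by fun_prop) 0 S
  have hyoung : ∫ s in (0 : ℝ)..S, levelSum a lam s * (V - 3 * κ * s ^ 2) ≤
      ∫ s in (0 : ℝ)..S, (η * levelSum a lam s ^ 3 +
        2 / (3 * √(3 * η)) * √(V - 3 * κ * s ^ 2) ^ 3) :=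
    intervalIntegral.integral_mono hS
      ((antitone_levelSum ha).intervalIntegrable.mul_continuousOn (by fun_prop))
      ((hint3.const_mul η).add (hsqrt.const_mul _)) fun s =>
        mul_le_mul_pow_three_add_mul_sqrt_pow_three (levelSum_nonneg ha s) hη _
  rw [integral_levelSum_mul_sub_sq hlam,
    intervalIntegral.integral_add (hint3.const_mul η) (hsqrt.const_mul _),
    intervalIntegral.integral_const_mul, intervalIntegral.integral_const_mul] at hyoung
  have hbound := mul_le_mul_of_nonneg_left
    (integral_sqrt_sub_mul_sq_pow_three_le hV (by positivity : 0 < 3 * κ) S)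
    (by positivity : 0 ≤ 2 / (3 * √(3 * η)))
  have hconst : V * ρ - 2 / (3 * √(3 * η)) * (V ^ 2 / √(3 * κ) * (3 * π / 16)) =
      6 * √(η * κ) / π * ρ ^ 2 := by
    rw [hVdef, sqrt_mul hη.le, sqrt_mul zero_le_three, sqrt_mul zero_le_three]
    field_simp
    rw [sq_sqrt zero_le_three]
    ring
  linarith only [hyoung, hbound, hconst]

end Layer

section Weighted

lemma gramCube_complex {ι : Type*} [Fintype ι] (u : ι → ℂ) :
    gramCube u = (∑ n, ‖u n‖ ^ 2) ^ 3 := by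
  have hgram : Matrix.gram ℂ u = Matrix.vecMulVec (fun n => conj (u n)) u := by
    ext n m
    rw [Matrix.gram_apply, RCLike.inner_apply, Matrix.vecMulVec_apply, mul_comm]
  have hdot : (u ⬝ᵥ fun n => conj (u n)) = ((∑ n, ‖u n‖ ^ 2 : ℝ) : ℂ) := by
    simp only [dotProduct, Complex.mul_conj', Complex.ofReal_sum, Complex.ofReal_pow]
  rw [gramCube, hgram, Matrix.vecMulVec_mul_vecMulVec,
    Matrix.vecMulVec_mul_vecMulVec, hdot, Matrix.trace_vecMulVec, smul_dotProduct, hdot,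
    dotProduct_smul, dotProduct_comm, hdot]
  simp only [smul_eq_mul, ← Complex.ofReal_mul, Complex.ofReal_re]
  ring

lemma integrableOn_levelSum_pow_three {ι : Type*} [Fintype ι] {a : ι → ℝ → ℝ}
    (ha : ∀ i, Continuous (a i)) (h0 : ∀ i y, 0 ≤ a i y) (lam : ι → ℝ) {s : Set (ℝ × ℝ)}
    (hs : Bornology.IsBounded s) :
    IntegrableOn (fun p : ℝ × ℝ => levelSum (fun i => a i p.1) lam p.2 ^ 3) s := by
  have hdom : IntegrableOn (fun p : ℝ × ℝ => (∑ i, a i p.1) ^ 3) s :=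
    (Continuous.continuousOn (by fun_prop)).integrableOn_compact hs.isCompact_closure
      |>.mono_set subset_closure
  have hmeas : Measurable fun p : ℝ × ℝ => levelSum (fun i => a i p.1) lam p.2 ^ 3 := by
    simp only [levelSum, Finset.sum_filter]
    exact (Finset.measurable_sum _ fun i _ => Measurable.ite
      (measurableSet_le measurable_snd measurable_const)
      ((ha i).measurable.comp measurable_fst) measurable_const).pow_const 3
  refine Integrable.mono' hdom hmeas.aestronglyMeasurable (ae_of_all _ fun p => ?_)
  have hp := levelSum_nonneg (lam := lam) (fun i => h0 i p.1) p.2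
  rw [norm_of_nonneg (pow_nonneg hp 3)]
  exact pow_le_pow_left₀ hp (Finset.sum_le_sum_of_subset_of_nonneg (Finset.subset_univ _)
    fun i _ _ => h0 i p.1) 3

lemma mul_integral_sq_sum_mul_le_integral_levelSum_pow_three {ι : Type*} [Fintype ι]
    {a : ι → ℝ → ℝ} (ha : ∀ i, Continuous (a i)) (h0 : ∀ i y, 0 ≤ a i y) {lam : ι → ℝ} {L S η κ : ℝ}
    (hL : 0 ≤ L) (hS : 0 ≤ S) (hlam : ∀ i, lam i ∈ Set.Icc 0 S) (hη : 0 < η) (hκ : 0 < κ) :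
    6 * √(η * κ) / π * ∫ y in (0 : ℝ)..L, (∑ i, a i y * lam i) ^ 2 ≤
      η * (∫ s in (0 : ℝ)..S, ∫ y in (0 : ℝ)..L, levelSum (fun i => a i y) lam s ^ 3) +
        κ * ∑ i, (∫ y in (0 : ℝ)..L, a i y) * lam i ^ 3 := by
  have hint := integrableOn_levelSum_pow_three ha h0 lam
    ((Metric.isBounded_Ioc (0 : ℝ) L).prod (Metric.isBounded_Ioc (0 : ℝ) S))
  have hswap := intervalIntegral_intervalIntegral_swap
    (F := fun y s => levelSum (fun i => a i y) lam s ^ 3) (a := 0) (b := L) (c := 0) (d := S)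
    (by rwa [Set.uIoc_of_le hL, Set.uIoc_of_le hS])
  have hlayer : IntervalIntegrable
      (fun y => ∫ s in (0 : ℝ)..S, levelSum (fun i => a i y) lam s ^ 3) volume 0 L := by
    rw [IntegrableOn, Measure.volume_eq_prod, ← Measure.prod_restrict] at hint
    simpa only [intervalIntegrable_iff_integrableOn_Ioc_of_le hL, IntegrableOn,
      intervalIntegral.integral_of_le hS] using hint.integral_prod_left
  have hcube : IntervalIntegrable (fun y => ∑ i, a i y * lam i ^ 3) volume 0 L :=
    Continuous.intervalIntegrable (by fun_prop) 0 L
  calc 6 * √(η * κ) / π * ∫ y in (0 : ℝ)..L, (∑ i, a i y * lam i) ^ 2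
      = ∫ y in (0 : ℝ)..L, 6 * √(η * κ) / π * (∑ i, a i y * lam i) ^ 2 := by
        rw [intervalIntegral.integral_const_mul]
    _ ≤ ∫ y in (0 : ℝ)..L, (η * (∫ s in (0 : ℝ)..S, levelSum (fun i => a i y) lam s ^ 3) +
          κ * ∑ i, a i y * lam i ^ 3) :=
        intervalIntegral.integral_mono_on hL (Continuous.intervalIntegrable (by fun_prop) 0 L)
          ((hlayer.const_mul η).add (hcube.const_mul κ)) fun y _ =>
            mul_sq_sum_mul_le_integral_levelSum_pow_three (fun i => h0 i y) hS hlam hη hκ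
    _ = _ := by
        rw [intervalIntegral.integral_add (hlayer.const_mul η) (hcube.const_mul κ),
          intervalIntegral.integral_const_mul, intervalIntegral.integral_const_mul, hswap,
          intervalIntegral.integral_finsetSum fun i _ =>
            Continuous.intervalIntegrable (by fun_prop) 0 L]
        simp only [intervalIntegral.integral_mul_const]

lemma norm_inv_sqrt_smul_sq_mul {E : Type*} [NormedAddCommGroup E] [NormedSpace ℂ E] {r : ℝ}
    (hr : 0 < r) (z : E) : ‖((√r)⁻¹ : ℂ) • z‖ ^ 2 * r = ‖z‖ ^ 2 := by
  rw [norm_smul, norm_inv, Complex.norm_of_nonneg (sqrt_nonneg _), mul_pow, inv_pow,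
    sq_sqrt hr.le, mul_right_comm, inv_mul_cancel₀ hr.ne', one_mul]

lemma l2Gram_inv_sqrt_smul_eq_one {ι H : Type*} [DecidableEq ι] [NormedAddCommGroup H]
    [InnerProductSpace ℂ H] {L : ℝ} {u : ι → ℝ → H}
    (horth : Pairwise fun i j => l2Gram L u i j = 0)
    (hpos : ∀ i, 0 < ∫ x in (0 : ℝ)..L, ‖u i x‖ ^ 2) :
    l2Gram L (fun i x => ((√(∫ x in (0 : ℝ)..L, ‖u i x‖ ^ 2))⁻¹ : ℂ) • u i x) = 1 := by
  ext i j
  rcases eq_or_ne i j with rfl | hij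
  · rw [l2Gram_apply_self, Matrix.one_apply_eq, Complex.ofReal_eq_one]
    refine mul_right_cancel₀ (hpos i).ne' ?_
    rw [← intervalIntegral.integral_mul_const, one_mul]
    simp only [norm_inv_sqrt_smul_sq_mul (hpos i)]
  · have hij0 := horth hij
    simp only [l2Gram, Matrix.of_apply] at hij0
    simp only [l2Gram, Matrix.of_apply, inner_smul_left, inner_smul_right,
      intervalIntegral.integral_const_mul, hij0, mul_zero, Matrix.one_apply_ne hij]

variable {ι : Type} [Fintype ι] {K α L η κ : ℝ} {φ φ' : ι → ℝ → ℂ}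

namespace LiebThirringIneq

lemma integral_levelSum_pow_three_le [DecidableEq ι] (hLT : LiebThirringIneq ℂ K α L)
    (hφ : ∀ i, IsBloch α L (φ i) (φ' i)) (h1 : l2Gram L φ = 1) (lam : ι → ℝ) (s : ℝ) :
    ∫ y in (0 : ℝ)..L, levelSum (fun i => ‖φ i y‖ ^ 2) lam s ^ 3 ≤
      K * levelSum (fun i => ∫ y in (0 : ℝ)..L, ‖φ' i y‖ ^ 2) lam s := by
  have hsub : ∀ a : ι → ℝ, levelSum a lam s = ∑ i : {i // s ≤ lam i}, a i := fun a =>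
    Finset.sum_subtype _ (fun i => by simp only [Finset.mem_filter, Finset.mem_univ, true_and]) a
  have hslice := hLT (fun i : {i // s ≤ lam i} => φ i) (fun i => φ' i) (fun i => hφ i)
    (by
      ext i j
      simpa only [l2Gram, Matrix.of_apply, Matrix.one_apply, Subtype.ext_iff]
        using congrFun₂ h1 i j)
  simpa only [gramCube_complex, hsub] using hslice

/- The Lieb–Thirring inequality for the density matrix `∑ i, lam i |φ i⟩⟨φ i|`, proved by applying
the hypothesis to its spectral projections above each height. -/
lemma mul_integral_sq_sum_mul_le [DecidableEq ι] (hLT : LiebThirringIneq ℂ K α L) (hL : 0 ≤ L)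
    (hφ : ∀ i, IsBloch α L (φ i) (φ' i)) (h1 : l2Gram L φ = 1) {lam : ι → ℝ}
    (hlam : ∀ i, 0 ≤ lam i) (hη : 0 < η) (hκ : 0 < κ) :
    6 * √(η * κ) / π * ∫ y in (0 : ℝ)..L, (∑ i, ‖φ i y‖ ^ 2 * lam i) ^ 2 ≤
      η * (K * ∑ i, (∫ y in (0 : ℝ)..L, ‖φ' i y‖ ^ 2) * lam i) + κ * ∑ i, lam i ^ 3 := by
  set S := ∑ i, lam i
  set T := fun i => ∫ y in (0 : ℝ)..L, ‖φ' i y‖ ^ 2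
  have hT : ∀ i, 0 ≤ T i := fun i => intervalIntegral.integral_nonneg hL fun y _ => by positivity
  have hS : 0 ≤ S := Finset.sum_nonneg fun i _ => hlam i
  have hlamS : ∀ i, lam i ∈ Set.Icc 0 S := fun i =>
    ⟨hlam i, Finset.single_le_sum (fun j _ => hlam j) (Finset.mem_univ i)⟩
  have cφ : ∀ i, Continuous fun y => ‖φ i y‖ ^ 2 := fun i => (hφ i).continuous.norm.pow 2
  have hint := integrableOn_levelSum_pow_three cφ (fun i y => by positivity) lam
    ((Metric.isBounded_Ioc (0 : ℝ) L).prod (Metric.isBounded_Ioc (0 : ℝ) S))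
  rw [IntegrableOn, Measure.volume_eq_prod, ← Measure.prod_restrict] at hint
  have hslices : ∫ s in (0 : ℝ)..S, ∫ y in (0 : ℝ)..L, levelSum (fun i => ‖φ i y‖ ^ 2) lam s ^ 3 ≤
      K * ∑ i, T i * lam i := by
    calc _ ≤ ∫ s in (0 : ℝ)..S, K * levelSum T lam s := by
          refine intervalIntegral.integral_mono_on hS ?_
            ((antitone_levelSum hT).intervalIntegrable.const_mul K)
            fun s _ => hLT.integral_levelSum_pow_three_le hφ h1 lam s
          simpa only [intervalIntegrable_iff_integrableOn_Ioc_of_le hS, IntegrableOn,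
            intervalIntegral.integral_of_le hL] using hint.integral_prod_right
      _ = K * ∑ i, T i * lam i := by
          have hlevel := integral_levelSum_mul (a := T) hlamS (p := fun _ => 1) continuous_const
          simp only [mul_one, integral_one, sub_zero] at hlevel
          rw [intervalIntegral.integral_const_mul, hlevel]
  have hlayer := mul_integral_sq_sum_mul_le_integral_levelSum_pow_three cφ
    (fun i y => by positivity) hL hS hlamS hη hκ
  simp only [integral_norm_sq_eq_one h1, one_mul] at hlayer
  exact hlayer.trans (by gcongr)

lemma mul_integral_sq_sum_le_of_pairwise_of_pos (hLT : LiebThirringIneq ℂ K α L)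
    (hL : 0 ≤ L) (hφ : ∀ i, IsBloch α L (φ i) (φ' i))
    (horth : Pairwise fun i j => l2Gram L φ i j = 0)
    (hpos : ∀ i, 0 < ∫ y in (0 : ℝ)..L, ‖φ i y‖ ^ 2) (hη : 0 < η) (hκ : 0 < κ) :
    6 * √(η * κ) / π * ∫ y in (0 : ℝ)..L, (∑ i, ‖φ i y‖ ^ 2) ^ 2 ≤
      η * (K * ∑ i, ∫ y in (0 : ℝ)..L, ‖φ' i y‖ ^ 2) +
        κ * ∑ i, (∫ y in (0 : ℝ)..L, ‖φ i y‖ ^ 2) ^ 3 := by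
  classical
  have hweighted := hLT.mul_integral_sq_sum_mul_le hL (fun i => (hφ i).const_smul _)
    (l2Gram_inv_sqrt_smul_eq_one horth hpos) (fun i => (hpos i).le) hη hκ
  simpa only [← intervalIntegral.integral_mul_const _ (fun y => ‖_ • φ' _ y‖ ^ 2),
    norm_inv_sqrt_smul_sq_mul (hpos _)] using hweighted

lemma mul_integral_sq_sum_le_of_pairwise (hLT : LiebThirringIneq ℂ K α L)
    (hL : 0 ≤ L) (hK : 0 ≤ K) (hφ : ∀ i, IsBloch α L (φ i) (φ' i))
    (horth : Pairwise fun i j => l2Gram L φ i j = 0) (hη : 0 < η) (hκ : 0 < κ) :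
    6 * √(η * κ) / π * ∫ y in (0 : ℝ)..L, (∑ i, ‖φ i y‖ ^ 2) ^ 2 ≤
      η * (K * ∑ i, ∫ y in (0 : ℝ)..L, ‖φ' i y‖ ^ 2) +
        κ * ∑ i, (∫ y in (0 : ℝ)..L, ‖φ i y‖ ^ 2) ^ 3 := by
  classical
  set lam := fun i => ∫ y in (0 : ℝ)..L, ‖φ i y‖ ^ 2
  have h0 : ∀ i, 0 ≤ lam i := fun i => intervalIntegral.integral_nonneg hL fun y _ => sq_nonneg _
  have hfilter : ∀ g : ι → ℝ, ∑ i : {i // 0 < lam i}, g i = ∑ i with 0 < lam i, g i := fun g =>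
    (Finset.sum_subtype _ (fun i => by simp only [Finset.mem_filter_univ]) g).symm
  have hsupport : ∀ g : ι → ℝ, (∀ i, lam i = 0 → g i = 0) →
      ∑ i : {i // 0 < lam i}, g i = ∑ i, g i := fun g hg => by
    rw [hfilter, Finset.sum_filter_of_ne fun i _ hi => (h0 i).lt_of_ne' (mt (hg i) hi)]
  have hzero : ∀ᵐ y ∂volume.restrict (Set.Ioc 0 L), ∀ i, lam i = 0 → ‖φ i y‖ ^ 2 = 0 := by
    refine ae_all_iff.2 fun i => eventually_imp_distrib_left.2 fun hi => ?_
    exact (intervalIntegral.integral_eq_zero_iff_of_le_of_nonneg_ae hL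
      (ae_of_all _ fun y => sq_nonneg _)
      (((hφ i).continuous.norm.pow 2).intervalIntegrable 0 L)).1 hi
  have hdensity : ∫ y in (0 : ℝ)..L, (∑ i : {i // 0 < lam i}, ‖φ i y‖ ^ 2) ^ 2 =
      ∫ y in (0 : ℝ)..L, (∑ i, ‖φ i y‖ ^ 2) ^ 2 := by
    rw [intervalIntegral.integral_of_le hL, intervalIntegral.integral_of_le hL]
    exact integral_congr_ae (hzero.mono fun y hy => by simp only [hsupport _ hy])
  have hpos := hLT.mul_integral_sq_sum_le_of_pairwise_of_pos hL
    (fun i : {i // 0 < lam i} => hφ i) (fun i j hij => horth (Subtype.coe_injective.ne hij))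
    (fun i => i.2) hη hκ
  rw [hdensity, hsupport (fun i => lam i ^ 3) fun i hi => by rw [hi, zero_pow three_ne_zero],
    hfilter fun i => ∫ y in (0 : ℝ)..L, ‖φ' i y‖ ^ 2] at hpos
  refine hpos.trans ?_
  gcongr
  · exact fun i _ _ => intervalIntegral.integral_nonneg hL fun y _ => sq_nonneg _
  · exact Finset.subset_univ _

/- Both sides are invariant under a common unitary rotation of `φ` and `e`, so the Gram matrix may
be assumed diagonal. -/
lemma mul_integral_sq_sum_le_of_l2Gram_eq_gram {H : Type*} [NormedAddCommGroup H]
    [InnerProductSpace ℂ H] (hLT : LiebThirringIneq ℂ K α L) (hL : 0 ≤ L) (hK : 0 ≤ K)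
    (hφ : ∀ i, IsBloch α L (φ i) (φ' i)) {e : ι → H} (he : l2Gram L φ = Matrix.gram ℂ e)
    (hη : 0 < η) (hκ : 0 < κ) :
    6 * √(η * κ) / π * ∫ y in (0 : ℝ)..L, (∑ i, ‖φ i y‖ ^ 2) ^ 2 ≤
      η * (K * ∑ i, ∫ y in (0 : ℝ)..L, ‖φ' i y‖ ^ 2) + κ * gramCube e := by
  classical
  obtain ⟨U, hU, horth⟩ := exists_unitary_rotate_orthogonal e
  have hgram : l2Gram L (rotate U φ) = Matrix.gram ℂ (rotate U e) := by
    rw [l2Gram_rotate fun i => (hφ i).continuous, he, gram_rotate]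
  have hnorm : ∀ i, ∫ y in (0 : ℝ)..L, ‖rotate U φ i y‖ ^ 2 = ‖rotate U e i‖ ^ 2 := fun i => by
    have hdiag := congrFun₂ hgram i i
    rw [l2Gram_apply_self, Matrix.gram_apply, inner_self_eq_norm_sq_to_K] at hdiag
    exact Complex.ofReal_injective (hdiag.trans (Complex.ofReal_pow _ _).symm)
  have hrot := hLT.mul_integral_sq_sum_le_of_pairwise hL hK (IsBloch.rotate hφ U)
    (fun i j hij => by rw [hgram]; exact horth hij) hη hκ
  have hρ : ∀ y, ∑ i, ‖rotate U φ i y‖ ^ 2 = ∑ i, ‖φ i y‖ ^ 2 := fun y => by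
    simp only [rotate_apply, sum_norm_sq_rotate hU]
  have hcube : ∑ i, (‖rotate U e i‖ ^ 2) ^ 3 = gramCube e := by
    simp only [← pow_mul, ← gramCube_rotate hU e, gramCube_of_orthogonal horth]
  simpa only [hρ, hnorm, hcube, sum_integral_norm_sq_rotate (fun i => (hφ i).continuous_deriv) hU]
    using hrot

end LiebThirringIneq

end Weighted

section Torus

/-- The Hilbert space `L²([0, M])`, over the compact type `Set.Icc 0 M` so that continuous functions
embed into it. Restricting Lebesgue measure before pulling it back makes it visibly finite. -/
abbrev L2Icc (M : ℝ) : Type :=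
  Lp ℂ 2 ((volume.restrict (Set.Icc 0 M)).comap ((↑) : Set.Icc 0 M → ℝ))

/-- The slice `y ↦ f (x, y)` as an element of `L²([0, M])`. -/
noncomputable def l2Slice (M : ℝ) (f : C(ℝ × ℝ, ℂ)) (x : ℝ) : L2Icc M :=
  ContinuousMap.toLp 2 _ ℂ ((f.curry x).restrict (Set.Icc 0 M))

lemma continuous_restrict_curry (M : ℝ) (f : C(ℝ × ℝ, ℂ)) :
    Continuous fun x => (f.curry x).restrict (Set.Icc 0 M) :=
  (ContinuousMap.continuous_restrict _).comp f.curry.continuous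

lemma continuous_l2Slice (M : ℝ) (f : C(ℝ × ℝ, ℂ)) : Continuous (l2Slice M f) :=
  (ContinuousMap.toLp 2 _ ℂ).continuous.comp (continuous_restrict_curry M f)

lemma inner_l2Slice {M : ℝ} (hM : 0 ≤ M) (f g : C(ℝ × ℝ, ℂ)) (x : ℝ) :
    ⟪l2Slice M f x, l2Slice M g x⟫_ℂ = ∫ y in (0 : ℝ)..M, ⟪f (x, y), g (x, y)⟫_ℂ := by
  rw [l2Slice, l2Slice, ContinuousMap.inner_toLp, intervalIntegral.integral_of_le hM,
    ← integral_Icc_eq_integral_Ioc]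
  have hsubtype := integral_subtype_comap (μ := volume.restrict (Set.Icc 0 M))
    (measurableSet_Icc (a := 0) (b := M)) fun y => ⟪f (x, y), g (x, y)⟫_ℂ
  rwa [Measure.restrict_restrict_of_subset subset_rfl] at hsubtype

lemma norm_l2Slice_sq {M : ℝ} (hM : 0 ≤ M) (f : C(ℝ × ℝ, ℂ)) (x : ℝ) :
    ‖l2Slice M f x‖ ^ 2 = ∫ y in (0 : ℝ)..M, ‖f (x, y)‖ ^ 2 := by
  have h := inner_l2Slice hM f f x
  simp only [inner_self_eq_norm_sq_to_K, Complex.coe_algebraMap, ← Complex.ofReal_pow,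
    intervalIntegral.integral_ofReal] at h
  exact Complex.ofReal_injective h

lemma restrict_curry_eq_add_integral {f f' : C(ℝ × ℝ, ℂ)}
    (hf : ∀ x y, HasDerivAt (fun x => f (x, y)) (f' (x, y)) x) (M x : ℝ) :
    (f.curry x).restrict (Set.Icc 0 M) = (f.curry 0).restrict (Set.Icc 0 M) +
      ∫ t in (0 : ℝ)..x, (f'.curry t).restrict (Set.Icc 0 M) := by
  ext y
  have heval := (ContinuousMap.evalCLM ℂ y).intervalIntegral_comp_comm
    ((continuous_restrict_curry M f').intervalIntegrable (μ := volume) 0 x)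
  have hftc := intervalIntegral.integral_eq_sub_of_hasDerivAt (fun t _ => hf t y)
    (Continuous.intervalIntegrable (by fun_prop) 0 x)
  rw [ContinuousMap.add_apply]
  exact (add_eq_of_eq_sub' (heval.symm.trans hftc)).symm

lemma hasDerivAt_l2Slice {f f' : C(ℝ × ℝ, ℂ)}
    (hf : ∀ x y, HasDerivAt (fun x => f (x, y)) (f' (x, y)) x) (M x : ℝ) :
    HasDerivAt (l2Slice M f) (l2Slice M f' x) x := by
  have hprim := ((continuous_restrict_curry M f').integral_hasStrictDerivAt 0 x).hasDerivAt
  replace hprim := hprim.const_add ((f.curry 0).restrict (Set.Icc 0 M))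
  simp only [← restrict_curry_eq_add_integral hf] at hprim
  let toL2 : C(Set.Icc 0 M, ℂ) →L[ℂ] L2Icc M := ContinuousMap.toLp 2 _ ℂ
  exact (toL2.restrictScalars ℝ).hasFDerivAt.comp_hasDerivAt x hprim

lemma IsBloch.l2Slice {α L : ℝ} {f f' : C(ℝ × ℝ, ℂ)}
    (hf : ∀ y, IsBloch α L (fun x => f (x, y)) (fun x => f' (x, y))) (M : ℝ) :
    IsBloch α L (l2Slice M f) (l2Slice M f') where
  hasDerivAt := hasDerivAt_l2Slice (fun x y => (hf y).hasDerivAt x) M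
  continuous_deriv := continuous_l2Slice M f'
  map_add_period x := by
    rw [_root_.l2Slice, _root_.l2Slice, ← map_smul]
    congr 1
    ext y
    exact (hf y).map_add_period x

variable {ι : Type} [Fintype ι] {α₁ α₂ L M K₁ K₂ : ℝ} {v v₁ v₂ : ι → C(ℝ × ℝ, ℂ)}

lemma mul_integral_sq_sum_le_add_gramCube_l2Slice (hM : 0 ≤ M) (hK₁ : 0 < K₁) (hK₂ : 0 < K₂)
    (hLT₂ : LiebThirringIneq ℂ K₂ α₂ M) {x : ℝ}
    (hv₂ : ∀ n, IsBloch α₂ M (fun y => v n (x, y)) (fun y => v₂ n (x, y))) :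
    6 * √(K₂⁻¹ * K₁⁻¹) / π * ∫ y in (0 : ℝ)..M, (∑ n, ‖v n (x, y)‖ ^ 2) ^ 2 ≤
      (∑ n, ∫ y in (0 : ℝ)..M, ‖v₂ n (x, y)‖ ^ 2) +
        K₁⁻¹ * gramCube fun n => l2Slice M (v n) x := by
  have hgram : l2Gram M (fun n y => v n (x, y)) = Matrix.gram ℂ fun n => l2Slice M (v n) x := by
    ext n m
    exact (inner_l2Slice hM (v n) (v m) x).symm
  have hfibre := hLT₂.mul_integral_sq_sum_le_of_l2Gram_eq_gram hM hK₂.le hv₂ hgram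
    (inv_pos.2 hK₂) (inv_pos.2 hK₁)
  rwa [inv_mul_cancel_left₀ hK₂.ne'] at hfibre

lemma mul_integral_integral_sq_sum_le_of_liebThirringIneq [DecidableEq ι] (hL : 0 ≤ L)
    (hM : 0 ≤ M) (hK₁ : 0 < K₁) (hK₂ : 0 < K₂)
    (hLT₁ : LiebThirringIneq (L2Icc M) K₁ α₁ L) (hLT₂ : LiebThirringIneq ℂ K₂ α₂ M)
    (hv₁ : ∀ n y, IsBloch α₁ L (fun x => v n (x, y)) (fun x => v₁ n (x, y)))
    (hv₂ : ∀ n x, IsBloch α₂ M (fun y => v n (x, y)) (fun y => v₂ n (x, y)))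
    (horth : l2Gram L (fun n => l2Slice M (v n)) = 1) :
    6 * √(K₂⁻¹ * K₁⁻¹) / π * ∫ x in (0 : ℝ)..L, ∫ y in (0 : ℝ)..M, (∑ n, ‖v n (x, y)‖ ^ 2) ^ 2 ≤
      (∑ n, ∫ x in (0 : ℝ)..L, ∫ y in (0 : ℝ)..M, ‖v₂ n (x, y)‖ ^ 2) +
        ∑ n, ∫ x in (0 : ℝ)..L, ∫ y in (0 : ℝ)..M, ‖v₁ n (x, y)‖ ^ 2 := by
  have cint : ∀ {F : ℝ → ℝ → ℝ}, Continuous (Function.uncurry F) →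
      Continuous fun x => ∫ y in (0 : ℝ)..M, F x y := fun hF =>
    intervalIntegral.continuous_parametric_intervalIntegral_of_continuous' hF 0 M
  have cv₂ : ∀ n, Continuous fun x => ∫ y in (0 : ℝ)..M, ‖v₂ n (x, y)‖ ^ 2 := fun n =>
    cint (by fun_prop)
  have csum : Continuous fun x => ∑ n, ∫ y in (0 : ℝ)..M, ‖v₂ n (x, y)‖ ^ 2 :=
    continuous_finsetSum _ fun n _ => cv₂ n
  have ccube : Continuous fun x => K₁⁻¹ * gramCube fun n => l2Slice M (v n) x :=
    (continuous_gramCube fun n => continuous_l2Slice M (v n)).const_mul _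
  have hbase := hLT₁ _ _ (fun n => IsBloch.l2Slice (hv₁ n) M) horth
  simp only [norm_l2Slice_sq hM] at hbase
  calc _ = ∫ x in (0 : ℝ)..L, 6 * √(K₂⁻¹ * K₁⁻¹) / π *
          ∫ y in (0 : ℝ)..M, (∑ n, ‖v n (x, y)‖ ^ 2) ^ 2 := by
        rw [intervalIntegral.integral_const_mul]
    _ ≤ ∫ x in (0 : ℝ)..L, ((∑ n, ∫ y in (0 : ℝ)..M, ‖v₂ n (x, y)‖ ^ 2) +
          K₁⁻¹ * gramCube fun n => l2Slice M (v n) x) :=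
        intervalIntegral.integral_mono_on hL
          (((cint (by fun_prop)).const_mul _).intervalIntegrable 0 L)
          ((csum.add ccube).intervalIntegrable 0 L) fun x _ =>
            mul_integral_sq_sum_le_add_gramCube_l2Slice hM hK₁ hK₂ hLT₂ fun n => hv₂ n x
    _ ≤ _ := by
        rw [intervalIntegral.integral_add (csum.intervalIntegrable 0 L)
          (ccube.intervalIntegrable 0 L), intervalIntegral.integral_const_mul,
          intervalIntegral.integral_finsetSum fun n _ => (cv₂ n).intervalIntegrable 0 L]
        exact add_le_add_right ((inv_mul_le_iff₀ hK₁).2 hbase) _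

theorem integral_integral_sq_sum_le_of_liebThirringIneq [DecidableEq ι] (hL : 0 ≤ L)
    (hM : 0 ≤ M) (hK₁ : 0 < K₁) (hK₂ : 0 < K₂)
    (hLT₁ : LiebThirringIneq (L2Icc M) K₁ α₁ L) (hLT₂ : LiebThirringIneq ℂ K₂ α₂ M)
    (hv₁ : ∀ n y, IsBloch α₁ L (fun x => v n (x, y)) (fun x => v₁ n (x, y)))
    (hv₂ : ∀ n x, IsBloch α₂ M (fun y => v n (x, y)) (fun y => v₂ n (x, y)))
    (horth : ∀ n m, ∫ x in (0 : ℝ)..L, ∫ y in (0 : ℝ)..M, ⟪v n (x, y), v m (x, y)⟫_ℂ =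
      if n = m then 1 else 0) :
    ∫ x in (0 : ℝ)..L, ∫ y in (0 : ℝ)..M, (∑ n, ‖v n (x, y)‖ ^ 2) ^ 2 ≤
      π / 6 * √(K₁ * K₂) * ∑ n, ∫ x in (0 : ℝ)..L, ∫ y in (0 : ℝ)..M,
        (‖v₁ n (x, y)‖ ^ 2 + ‖v₂ n (x, y)‖ ^ 2) := by
  have h1 : l2Gram L (fun n => l2Slice M (v n)) = 1 := by
    ext n m
    simp only [l2Gram, Matrix.of_apply, inner_l2Slice hM, horth, Matrix.one_apply]
  have hmain := mul_integral_integral_sq_sum_le_of_liebThirringIneq hL hM hK₁ hK₂ hLT₁ hLT₂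
    hv₁ hv₂ h1
  have hsqrt : √(K₂⁻¹ * K₁⁻¹) = (√(K₁ * K₂))⁻¹ := by rw [← mul_inv_rev, sqrt_inv]
  have hpos : 0 < √(K₁ * K₂) := sqrt_pos.2 (mul_pos hK₁ hK₂)
  have cint : ∀ w : C(ℝ × ℝ, ℂ), Continuous fun x => ∫ y in (0 : ℝ)..M, ‖w (x, y)‖ ^ 2 := fun w =>
    intervalIntegral.continuous_parametric_intervalIntegral_of_continuous' (by fun_prop) 0 M
  have henergy : ∀ n,
      ∫ x in (0 : ℝ)..L, ∫ y in (0 : ℝ)..M, (‖v₁ n (x, y)‖ ^ 2 + ‖v₂ n (x, y)‖ ^ 2) =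
      (∫ x in (0 : ℝ)..L, ∫ y in (0 : ℝ)..M, ‖v₁ n (x, y)‖ ^ 2) +
        ∫ x in (0 : ℝ)..L, ∫ y in (0 : ℝ)..M, ‖v₂ n (x, y)‖ ^ 2 := fun n => by
    rw [← intervalIntegral.integral_add ((cint _).intervalIntegrable 0 L)
      ((cint _).intervalIntegrable 0 L)]
    refine intervalIntegral.integral_congr fun x _ => ?_
    exact intervalIntegral.integral_add (Continuous.intervalIntegrable (by fun_prop) 0 M)
      (Continuous.intervalIntegrable (by fun_prop) 0 M)
  simp only [henergy, Finset.sum_add_distrib]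
  rw [hsqrt, add_comm] at hmain
  refine Eq.trans_le ?_ (mul_le_mul_of_nonneg_left hmain (by positivity : 0 ≤ π / 6 * √(K₁ * K₂)))
  field_simp

end Torus

section Gauge

variable {d : ℕ} {a : Fin d → ℝ → ℝ} {j : Fin d} {f : (Fin d → ℝ) → ℂ} {L α : ℝ}

/-- The phase `exp (i ∑ⱼ ∫₀^{xⱼ} aⱼ)`. Multiplication by it removes the diagonal vector potential
`x ↦ (aⱼ (xⱼ))ⱼ` from the magnetic momentum, turning periodic functions into Bloch functions. -/
noncomputable def gaugePhase (a : Fin d → ℝ → ℝ) (x : Fin d → ℝ) : ℂ :=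
  Complex.exp ((∑ j, ∫ t in (0 : ℝ)..x j, a j t : ℝ) * Complex.I)

lemma norm_gaugePhase (x : Fin d → ℝ) : ‖gaugePhase a x‖ = 1 :=
  Complex.norm_exp_ofReal_mul_I _

lemma continuous_gaugePhase (ha : ∀ j, Continuous (a j)) : Continuous (gaugePhase a) := by
  have hprim : ∀ j, Continuous fun x => ∫ t in (0 : ℝ)..x, a j t := fun j =>
    intervalIntegral.continuous_primitive (fun _ _ => (ha j).intervalIntegrable _ _) 0
  unfold gaugePhase
  fun_prop

lemma hasDerivAt_gaugePhase_update (ha : ∀ j, Continuous (a j)) (x : Fin d → ℝ) (t : ℝ) :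
    HasDerivAt (fun t => gaugePhase a (Function.update x j t))
      (gaugePhase a (Function.update x j t) * ((a j t : ℝ) * Complex.I)) t := by
  have hsum : HasDerivAt (fun t => ∑ i, ∫ s in (0 : ℝ)..Function.update x j t i, a i s)
      (∑ i, a i (Function.update x j t i) * (Pi.single j 1 : Fin d → ℝ) i) t :=
    HasDerivAt.fun_sum fun i _ => ((ha i).integral_hasStrictDerivAt 0 _).hasDerivAt.comp t
      (hasDerivAt_pi.1 (hasDerivAt_update x j t) i)
  have hval : ∑ i, a i (Function.update x j t i) * (Pi.single j 1 : Fin d → ℝ) i = a j t := by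
    simp [Pi.single_apply]
  exact ((hval ▸ hsum).ofReal_comp.mul_const Complex.I).cexp

lemma gaugePhase_add_single (ha : ∀ j, Continuous (a j)) (haP : Function.Periodic (a j) L)
    (x : Fin d → ℝ) : gaugePhase a (x + Pi.single j L) =
      Complex.exp ((∫ t in (0 : ℝ)..L, a j t : ℝ) * Complex.I) * gaugePhase a x := by
  have hterm : ∀ i, ∫ t in (0 : ℝ)..(x + (Pi.single j L : Fin d → ℝ)) i, a i t =
      (Pi.single j (∫ t in (0 : ℝ)..L, a j t) : Fin d → ℝ) i + ∫ t in (0 : ℝ)..x i, a i t := by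
    intro i
    rcases eq_or_ne i j with rfl | hij
    · rw [Pi.add_apply, Pi.single_eq_same, Pi.single_eq_same,
        ← intervalIntegral.integral_add_adjacent_intervals ((ha i).intervalIntegrable 0 (x i))
          ((ha i).intervalIntegrable (x i) (x i + L)),
        haP.intervalIntegral_add_eq (x i) 0, zero_add, add_comm]
    · simp [hij]
  simp only [gaugePhase, hterm, Finset.sum_add_distrib, Finset.sum_pi_single', Finset.mem_univ,
    if_true]
  rw [Complex.ofReal_add, add_mul, Complex.exp_add]

lemma continuous_magOp (ha : Continuous (a j)) (hf : ContDiff ℝ 1 f) :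
    Continuous (magOp a j f) := by
  have hf' := hf.continuous_fderiv one_ne_zero
  have hf₀ := hf.continuous
  unfold magOp
  fun_prop

lemma hasDerivAt_gaugePhase_mul_update (ha : ∀ j, Continuous (a j)) (hf : Differentiable ℝ f)
    (x : Fin d → ℝ) (t : ℝ) :
    HasDerivAt (fun t => gaugePhase a (Function.update x j t) * f (Function.update x j t))
      (gaugePhase a (Function.update x j t) *
        (-Complex.I * magOp a j f (Function.update x j t))) t := by
  refine ((hasDerivAt_gaugePhase_update ha x t).mul
    ((hf _).hasFDerivAt.comp_hasDerivAt t (hasDerivAt_update x j t))).congr_deriv ?_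
  simp only [magOp, Function.comp_apply, Function.update_self]
  linear_combination (gaugePhase a (Function.update x j t) *
    fderiv ℝ f (Function.update x j t) (Pi.single j 1)) * Complex.I_sq

lemma isBloch_gaugePhase_mul_update (ha : ∀ j, Continuous (a j)) (haP : Function.Periodic (a j) L)
    (hα : α = 1 / (2 * π) * ∫ t in (0 : ℝ)..L, a j t) (hf : ContDiff ℝ 1 f)
    (hfP : ∀ x, f (x + Pi.single j L) = f x) (x : Fin d → ℝ) :
    IsBloch α L (fun t => gaugePhase a (Function.update x j t) * f (Function.update x j t))
      (fun t => gaugePhase a (Function.update x j t) *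
        (-Complex.I * magOp a j f (Function.update x j t))) where
  hasDerivAt := hasDerivAt_gaugePhase_mul_update ha (hf.differentiable one_ne_zero) x
  continuous_deriv :=
    ((continuous_gaugePhase ha).mul (continuous_const.mul (continuous_magOp (ha j) hf))).comp
      (continuous_const.update j continuous_id)
  map_add_period t := by
    have hshift : Function.update x j (t + L) = Function.update x j t + Pi.single j L := by
      ext i
      rcases eq_or_ne i j with rfl | hij <;> simp [*]
    have hflux : ∫ t in (0 : ℝ)..L, a j t = 2 * π * α := by rw [hα]; field_simp
    rw [hshift, hfP, gaugePhase_add_single ha haP, hflux, mul_assoc, smul_eq_mul]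

end Gauge

section TwoDimensional

lemma setIntegral_univ_pi_Ioc_fin_two {E : Type*} [NormedAddCommGroup E] [NormedSpace ℝ E]
    {f : (Fin 2 → ℝ) → E} (hf : Continuous f) {L : Fin 2 → ℝ} (hL : ∀ j, 0 ≤ L j) :
    ∫ x in Set.univ.pi (fun j => Set.Ioc 0 (L j)), f x =
      ∫ x in (0 : ℝ)..L 0, ∫ y in (0 : ℝ)..L 1, f ![x, y] := by
  have hpre : (MeasurableEquiv.finTwoArrow (α := ℝ)).symm ⁻¹'
      (Set.univ.pi fun j => Set.Ioc 0 (L j)) = Set.Ioc 0 (L 0) ×ˢ Set.Ioc 0 (L 1) := by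
    ext p
    simp [Set.mem_pi, Fin.forall_fin_two]
  have hcont : Continuous fun p : ℝ × ℝ => f ![p.1, p.2] := by fun_prop
  have hint : IntegrableOn (fun p : ℝ × ℝ => f ![p.1, p.2])
      (Set.Ioc 0 (L 0) ×ˢ Set.Ioc 0 (L 1)) (volume.prod volume) :=
    (hcont.continuousOn.integrableOn_compact (isCompact_Icc.prod isCompact_Icc)).mono_set
      (Set.prod_mono Set.Ioc_subset_Icc_self Set.Ioc_subset_Icc_self)
  rw [← (volume_preserving_finTwoArrow ℝ).symm.setIntegral_preimage_emb
    MeasurableEquiv.finTwoArrow.symm.measurableEmbedding, hpre, Measure.volume_eq_prod]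
  simp only [intervalIntegral.integral_of_le (hL _)]
  exact setIntegral_prod _ hint

/-- The function `(x, y) ↦ gaugePhase a (x, y) * f (x, y)` on the plane, bundled and written in
terms of pairs so that it can be sliced in either variable. -/
noncomputable def gaugeTransform (a : Fin 2 → C(ℝ, ℝ)) (f : C(Fin 2 → ℝ, ℂ)) : C(ℝ × ℝ, ℂ) where
  toFun p := gaugePhase (fun j => a j) ![p.1, p.2] * f ![p.1, p.2]
  continuous_toFun := by
    have := continuous_gaugePhase fun j => (a j).continuous
    fun_prop

lemma norm_gaugeTransform (a : Fin 2 → C(ℝ, ℝ)) (f : C(Fin 2 → ℝ, ℂ)) (x y : ℝ) :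
    ‖gaugeTransform a f (x, y)‖ = ‖f ![x, y]‖ := by
  simp [gaugeTransform, norm_gaugePhase]

lemma inner_gaugeTransform (a : Fin 2 → C(ℝ, ℝ)) (f g : C(Fin 2 → ℝ, ℂ)) (x y : ℝ) :
    ⟪gaugeTransform a f (x, y), gaugeTransform a g (x, y)⟫_ℂ = g ![x, y] * conj (f ![x, y]) := by
  have hunit :
      gaugePhase (fun j => a j) ![x, y] * conj (gaugePhase (fun j => a j) ![x, y]) = 1 := by
    rw [Complex.mul_conj', norm_gaugePhase, Complex.ofReal_one, one_pow]
  simp only [gaugeTransform, ContinuousMap.coe_mk, RCLike.inner_apply, map_mul]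
  linear_combination (g ![x, y] * conj (f ![x, y])) * hunit

lemma isBloch_gaugeTransform_fst {a : Fin 2 → C(ℝ, ℝ)} {L α : ℝ} {f f' : C(Fin 2 → ℝ, ℂ)}
    (haP : Function.Periodic (a 0) L) (hα : α = 1 / (2 * π) * ∫ t in (0 : ℝ)..L, a 0 t)
    (hf : ContDiff ℝ 1 f) (hfP : ∀ x, f (x + Pi.single 0 L) = f x)
    (hf' : ∀ x, f' x = -Complex.I * magOp (fun j => a j) 0 f x) (y : ℝ) :
    IsBloch α L (fun x => gaugeTransform a f (x, y)) (fun x => gaugeTransform a f' (x, y)) := by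
  have hupdate : ∀ t, Function.update ![0, y] 0 t = ![t, y] := fun t => by
    ext i
    fin_cases i <;> rfl
  simpa only [gaugeTransform, ContinuousMap.coe_mk, hf', hupdate] using
    isBloch_gaugePhase_mul_update (fun j => (a j).continuous) haP hα hf hfP ![0, y]

lemma isBloch_gaugeTransform_snd {a : Fin 2 → C(ℝ, ℝ)} {L α : ℝ} {f f' : C(Fin 2 → ℝ, ℂ)}
    (haP : Function.Periodic (a 1) L) (hα : α = 1 / (2 * π) * ∫ t in (0 : ℝ)..L, a 1 t)
    (hf : ContDiff ℝ 1 f) (hfP : ∀ x, f (x + Pi.single 1 L) = f x)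
    (hf' : ∀ x, f' x = -Complex.I * magOp (fun j => a j) 1 f x) (x : ℝ) :
    IsBloch α L (fun y => gaugeTransform a f (x, y)) (fun y => gaugeTransform a f' (x, y)) := by
  have hupdate : ∀ t, Function.update ![x, 0] 1 t = ![x, t] := fun t => by
    ext i
    fin_cases i <;> rfl
  simpa only [gaugeTransform, ContinuousMap.coe_mk, hf', hupdate] using
    isBloch_gaugePhase_mul_update (fun j => (a j).continuous) haP hα hf hfP ![x, 0]

end TwoDimensional

/-- Lieb–Thirring inequality for orthonormal systems on the 2D torus. -/
theorem lieb_thirring_orthonormal_torus2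
    (Lp : Fin 2 → ℝ) (hLp : ∀ j, 0 < Lp j)
    (a : Fin 2 → ℝ → ℝ) (ha : ∀ j, Continuous (a j))
    (haP : ∀ j, Function.Periodic (a j) (Lp j))
    (α : Fin 2 → ℝ) (hα : ∀ j, α j = (1 / (2 * Real.pi)) * ∫ x in (0:ℝ)..(Lp j), a j x)
    (hαZ : ∀ j, ∀ m : ℤ, α j ≠ (m : ℝ))
    (N : ℕ) (ψ : Fin N → (Fin 2 → ℝ) → ℂ)
    (hψ : ∀ n, ContDiff ℝ 1 (ψ n))
    (hψP : ∀ n (j : Fin 2) (x : Fin 2 → ℝ), ψ n (x + Pi.single j (Lp j)) = ψ n x)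
    (horth : ∀ n m, ∫ x in Set.univ.pi (fun j => Set.Ioc 0 (Lp j)),
        ψ n x * (starRingEnd ℂ) (ψ m x) = if n = m then 1 else 0) :
    ∫ x in Set.univ.pi (fun j => Set.Ioc 0 (Lp j)), (∑ n, ‖ψ n x‖ ^ 2) ^ 2 ≤
      (Real.pi / 6) * Real.sqrt (Kmin (α 0) * Kmin (α 1)) *
        ∑ n, ∫ x in Set.univ.pi (fun j => Set.Ioc 0 (Lp j)),
          ∑ j, ‖magOp a j (ψ n) x‖ ^ 2 := by
  let A : Fin 2 → C(ℝ, ℝ) := fun j => ⟨a j, ha j⟩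
  let Ψ : Fin N → C(Fin 2 → ℝ, ℂ) := fun n => ⟨ψ n, (hψ n).continuous⟩
  let D : Fin 2 → Fin N → C(Fin 2 → ℝ, ℂ) := fun j n =>
    ⟨fun x => -Complex.I * magOp a j (ψ n) x,
      continuous_const.mul (continuous_magOp (ha j) (hψ n))⟩
  have hnormD : ∀ j n x, ‖D j n x‖ = ‖magOp a j (ψ n) x‖ := fun j n x => by simp [D]
  have hmain := integral_integral_sq_sum_le_of_liebThirringIneq
    (v := fun n => gaugeTransform A (Ψ n)) (v₁ := fun n => gaugeTransform A (D 0 n))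
    (v₂ := fun n => gaugeTransform A (D 1 n)) (hLp 0).le (hLp 1).le (Kmin_pos (hαZ 0))
    (Kmin_pos (hαZ 1)) (liebThirringIneq_Kmin (hLp 0) (hαZ 0))
    (liebThirringIneq_Kmin (hLp 1) (hαZ 1))
    (fun n => isBloch_gaugeTransform_fst (haP 0) (hα 0) (hψ n) (hψP n 0) fun _ => rfl)
    (fun n => isBloch_gaugeTransform_snd (haP 1) (hα 1) (hψ n) (hψP n 1) fun _ => rfl)
    (fun n m => by
      simp only [inner_gaugeTransform, eq_comm (a := n), ← horth m n]
      exact (setIntegral_univ_pi_Ioc_fin_two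
        ((Ψ m).continuous.mul (Complex.continuous_conj.comp (Ψ n).continuous))
        fun j => (hLp j).le).symm)
  have hcψ : ∀ n, Continuous (ψ n) := fun n => (hψ n).continuous
  have hcD : ∀ j n, Continuous (magOp a j (ψ n)) := fun j n => continuous_magOp (ha j) (hψ n)
  have hbox {g : (Fin 2 → ℝ) → ℝ} (hg : Continuous g) :=
    setIntegral_univ_pi_Ioc_fin_two hg fun j => (hLp j).le
  rw [hbox (by fun_prop), Finset.sum_congr rfl fun n _ => hbox (by fun_prop)]
  simpa only [norm_gaugeTransform, hnormD, Fin.sum_univ_two, Ψ, ContinuousMap.coe_mk] using hmain
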